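/- arXiv:1809.10550 — 3 statements merged into one kernel-verified Lean document; each statement's English description precedes it below -/
import Mathlib

section
/- (Lie criterion) An element f of the free Zinbiel algebra Zin(X) is a Lie element (i.e., f ∈ ST(X)) if and only if p(f) = −f. -/
/-- Nonempty words in the alphabet `X`. -/
def Word (X : Type) : Type := {l : List X // l ≠ []}

/-- The underlying vector space of the free Zinbiel algebra on `X` over `K`:
the space with basis the nonempty words in `X`. -/
abbrev Zin (K X : Type) [Field K] : Type := Word X →₀ K

/-- All shuffles (interleavings) of two words. -/
def shuffles {X : Type} : List X → List X → List (List X)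
  | [], l => [l]
  | a :: as, [] => [a :: as]
  | a :: as, b :: bs =>
      ((shuffles as (b :: bs)).map fun w => a :: w) ++
        ((shuffles (a :: as) bs).map fun w => b :: w)
  termination_by l₁ l₂ => l₁.length + l₂.length

/-- The basis vector of `Zin K X` corresponding to a word (`0` for the empty word). -/
noncomputable def ofList {K X : Type} [Field K] : List X → Zin K X
  | [] => 0
  | a :: t => Finsupp.single ⟨a :: t, by simp⟩ 1

/-- Sum of the basis vectors of a list of words. -/
noncomputable def ofLists {K X : Type} [Field K] (ls : List (List X)) : Zin K X :=
  (ls.map (ofList (K := K))).sum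

/-- The letter `x` as an element of `Zin K X`. -/
noncomputable def ofLetter {K X : Type} [Field K] (x : X) : Zin K X :=
  Finsupp.single ⟨[x], by simp⟩ 1

/-- The Zinbiel product on `Zin K X`, defined on basis words by
`u ∘ (v ++ [y]) = (u ⧢ v) ++ [y]` and extended bilinearly. -/
noncomputable def zmul {K X : Type} [Field K] (f g : Zin K X) : Zin K X :=
  f.sum fun u cu => g.sum fun w cw =>
    (cu * cw) • ofLists ((shuffles u.1 w.1.dropLast).map fun s => s ++ [w.1.getLast w.2])

/-- The shuffle product on `Zin K X`, extended bilinearly from words. -/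
noncomputable def shMul {K X : Type} [Field K] (f g : Zin K X) : Zin K X :=
  f.sum fun u cu => g.sum fun w cw => (cu * cw) • ofLists (shuffles u.1 w.1)

/-- The commutator `[f,g] = f∘g - g∘f` in `Zin K X`. -/
noncomputable def zbracket {K X : Type} [Field K] (f g : Zin K X) : Zin K X :=
  zmul f g - zmul g f

/-- The anticommutator `{f,g} = f∘g + g∘f` in `Zin K X`. -/
noncomputable def jprod {K X : Type} [Field K] (f g : Zin K X) : Zin K X :=
  zmul f g + zmul g f

/-- Swap the last two letters of a word (identity on shorter words). -/
def swapLast {X : Type} (l : List X) : List X :=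
  match l.reverse with
  | z :: y :: t => (y :: z :: t).reverse
  | _ => l

/-- The linear map `p : Zin(X) → Zin(X)`: `p(x) = -x` on letters, and `p` swaps
the last two letters of a word of length ≥ 2. -/
noncomputable def pMap {K X : Type} [Field K] (f : Zin K X) : Zin K X :=
  f.sum fun w c =>
    c • (if w.1.length = 1 then -(Finsupp.single w (1 : K)) else ofList (swapLast w.1))

/-- `bar f = f - p(f)`. -/
noncomputable def bar {K X : Type} [Field K] (f : Zin K X) : Zin K X := f - pMap f

/-- The skew element `\bar{w} = w - p(w)` associated to a word `w`. -/
noncomputable def skew {K X : Type} [Field K] (w : Word X) : Zin K X :=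
  bar (Finsupp.single w 1)

/-- Membership in `ST(X)`, the subalgebra of `(Zin(X), [·,·])` generated by the
letters: the free special Tortkara algebra on `X`. -/
inductive InST {K X : Type} [Field K] : Zin K X → Prop
  | letter (x : X) : InST (ofLetter x)
  | zero : InST 0
  | add {f g : Zin K X} : InST f → InST g → InST (f + g)
  | smul (c : K) {f : Zin K X} : InST f → InST (c • f)
  | bracket {f g : Zin K X} : InST f → InST g → InST (zbracket f g)

/-- Membership in `J(X)`, the subalgebra of `(Zin(X), {·,·})` generated by the
letters: the Jordan elements of `Zin(X)`. -/
inductive InJ {K X : Type} [Field K] : Zin K X → Prop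
  | letter (x : X) : InJ (ofLetter x)
  | zero : InJ 0
  | add {f g : Zin K X} : InJ f → InJ g → InJ (f + g)
  | smul (c : K) {f : Zin K X} : InJ f → InJ (c • f)
  | jmul {f g : Zin K X} : InJ f → InJ g → InJ (jprod f g)

/-- The left-normed anticommutator `{{⋯{x₁,x₂}⋯},xₙ}` of the letters of a word. -/
noncomputable def dynkinWord {K X : Type} [Field K] : List X → Zin K X
  | [] => 0
  | x :: xs => xs.foldl (fun acc y => jprod acc (ofLetter y)) (ofLetter x)

/-- The Dynkin map `D : Zin(X) → Zin(X)`. -/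
noncomputable def dynkin {K X : Type} [Field K] (f : Zin K X) : Zin K X :=
  f.sum fun w c => c • dynkinWord w.1

/-!
Write `x ⧢ y = x ∘ y + y ∘ x` and `S = ST(X)`.

Let `B(ub, vd) = (u ⧢ v)bd` for words `u, v` and letters `b, d`. Then
`p(f ∘ g) + B(f, p g) = B(g, f) + f ∘ p g`, and subtracting the same identity with `f` and `g`
exchanged gives `p[f, g] = -[f, g]` whenever `p f = -f` and `p g = -g`. Hence `p = -1` on `S`.

Conversely, if `p f = -f` then `2f = f - p f`, so it is enough that
`R(u | a, b) = (u ∘ a) ∘ b - (u ∘ b) ∘ a` lies in `S` for letters `a, b` and all `u`. Let `F k` be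
the span of the shuffle products of at most `k + 1` elements of `S`. For `D c w = c(w ∘ s) - w ⧢ s`
with `s ∈ S` one has `D 2 t = [t, s]` and `D (c + 1) (t ⧢ w) = t ∘ D c w + w ∘ [t, s]`, so by
induction on `k` the map `D (k + 2)` preserves `F k`. In particular `F k ∘ S ⊆ F (k + 1)`, and the
`F k` exhaust `Zin(X)`. Now `R(F k | S, S) ⊆ S` follows by induction on `k`: for `w ∈ F k` and
`a, b, c ∈ S` the identity
`R(w | [a, b], c) = R(a ⧢ w | b, c) + R(b ⧢ w | c, a) - R(w ∘ c | a, b)`,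
in which `w ∘ c` may be replaced by `(k + 2)⁻¹(w ⧢ c)`, and its cyclic permutations form an
invertible linear system modulo `S` for the three values `R(a ⧢ w | b, c)`, `R(b ⧢ w | c, a)`,
`R(c ⧢ w | a, b)`.
-/

namespace Zinbiel

section Abstract

variable {K Z : Type*}

section Identities

variable [CommRing K] [AddCommGroup Z] [Module K Z]

/-- The Zinbiel identity for a bilinear product, in the convention where `a ∘ b` models `∫ a db`. -/
def IsZinbiel (μ : Z →ₗ[K] Z →ₗ[K] Z) : Prop :=
  ∀ a b c, μ a (μ b c) = μ (μ a b + μ b a) c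

/-- The symmetrized product `a ∘ b + b ∘ a`, the abstract form of the shuffle product. -/
def anticommutator (μ : Z →ₗ[K] Z →ₗ[K] Z) : Z →ₗ[K] Z →ₗ[K] Z := μ + μ.flip

/-- The skew-symmetrized product `a ∘ b - b ∘ a`. -/
def commutator (μ : Z →ₗ[K] Z →ₗ[K] Z) : Z →ₗ[K] Z →ₗ[K] Z := μ - μ.flip

/-- The operator `u ↦ (u ∘ a) ∘ b - (u ∘ b) ∘ a`, a commutator of right multiplications. -/
def rightCommutator (μ : Z →ₗ[K] Z →ₗ[K] Z) (a b : Z) : Module.End K Z :=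
  ⁅μ.flip b, μ.flip a⁆

/-- The operator `w ↦ c • (w ∘ s) - (w ∘ s + s ∘ w)`; it measures how far `w ∘ s` is from `c⁻¹`
times the shuffle product of `w` and `s`. -/
def shuffleDefect (μ : Z →ₗ[K] Z →ₗ[K] Z) (c : K) (s : Z) : Z →ₗ[K] Z :=
  c • μ.flip s - (anticommutator μ).flip s

variable (μ : Z →ₗ[K] Z →ₗ[K] Z)

theorem anticommutator_apply (a b : Z) : anticommutator μ a b = μ a b + μ b a := rfl

theorem commutator_apply (a b : Z) : commutator μ a b = μ a b - μ b a := rfl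

theorem rightCommutator_apply (a b u : Z) :
    rightCommutator μ a b u = μ (μ u a) b - μ (μ u b) a := rfl

theorem shuffleDefect_apply (c : K) (s w : Z) :
    shuffleDefect μ c s w = c • μ w s - anticommutator μ w s := rfl

theorem anticommutator_comm (a b : Z) : anticommutator μ a b = anticommutator μ b a :=
  add_comm _ _

theorem shuffleDefect_two (s w : Z) : shuffleDefect μ 2 s w = commutator μ w s := by
  rw [shuffleDefect_apply, anticommutator_apply, commutator_apply]
  module

variable {μ}

theorem isZinbiel_of_span_eq_top {ι : Type*} {v : ι → Z} (hv : Submodule.span K (Set.range v) = ⊤)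
    (h : ∀ i j k, μ (v i) (μ (v j) (v k)) = μ (anticommutator μ (v i) (v j)) (v k)) :
    IsZinbiel μ := by
  have hfst (j k : ι) : μ.flip (μ (v j) (v k)) =
      μ.flip (v k) ∘ₗ (anticommutator μ).flip (v j) :=
    LinearMap.ext_on_range hv fun i => h i j k
  have hsnd (a : Z) (k : ι) : μ a ∘ₗ μ.flip (v k) = μ.flip (v k) ∘ₗ anticommutator μ a :=
    LinearMap.ext_on_range hv fun j => LinearMap.congr_fun (hfst j k) a
  have htrd (a b : Z) : μ a ∘ₗ μ b = μ (anticommutator μ a b) :=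
    LinearMap.ext_on_range hv fun k => LinearMap.congr_fun (hsnd a k) b
  exact fun a b => LinearMap.congr_fun (htrd a b)

namespace IsZinbiel

variable (hμ : IsZinbiel μ)
include hμ

theorem mul_mul (a b c : Z) : μ a (μ b c) = μ (μ a b) c + μ (μ b a) c := by
  rw [hμ, map_add, LinearMap.add_apply]

theorem shuffleDefect_anticommutator (c : K) (s t w : Z) :
    shuffleDefect μ (c + 1) s (anticommutator μ t w) =
      μ t (shuffleDefect μ c s w) + μ w (commutator μ t s) := by
  simp only [shuffleDefect_apply, anticommutator_apply, commutator_apply, map_add, map_sub,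
    map_smul, hμ.mul_mul]
  module

theorem commutator_commutator_add (a b c : Z) :
    commutator μ (commutator μ a b) c + commutator μ (commutator μ b c) a =
      (2 : K) • rightCommutator μ c a b := by
  simp only [commutator_apply, rightCommutator_apply, map_sub, LinearMap.sub_apply, hμ.mul_mul]
  module

theorem rightCommutator_commutator (a b c w : Z) :
    rightCommutator μ (commutator μ a b) c w =
      rightCommutator μ b c (anticommutator μ a w) +
        rightCommutator μ c a (anticommutator μ b w) - rightCommutator μ a b (μ w c) := by
  simp only [commutator_apply, rightCommutator_apply, anticommutator_apply, map_sub, map_add,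
    LinearMap.sub_apply, LinearMap.add_apply, hμ.mul_mul]
  module

end IsZinbiel

end Identities

section Filtration

variable [CommRing K] [AddCommGroup Z] [Module K Z]

/-- The span of the shuffle products of at most `k + 1` elements of `S`. -/
def shuffleFiltration (μ : Z →ₗ[K] Z →ₗ[K] Z) (S : Submodule K Z) : ℕ → Submodule K Z
  | 0 => S
  | k + 1 => shuffleFiltration μ S k ⊔
      Submodule.map₂ (anticommutator μ) S (shuffleFiltration μ S k)

variable {μ : Z →ₗ[K] Z →ₗ[K] Z} {S : Submodule K Z}

theorem shuffleFiltration_le_succ (k : ℕ) :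
    shuffleFiltration μ S k ≤ shuffleFiltration μ S (k + 1) :=
  le_sup_left

theorem anticommutator_mem_shuffleFiltration {k : ℕ} {s w : Z} (hs : s ∈ S)
    (hw : w ∈ shuffleFiltration μ S k) :
    anticommutator μ s w ∈ shuffleFiltration μ S (k + 1) :=
  le_sup_right (a := shuffleFiltration μ S k) (Submodule.apply_mem_map₂ _ hs hw)

theorem shuffleFiltration_succ_le {k : ℕ} {T : Submodule K Z}
    (hT : shuffleFiltration μ S k ≤ T)
    (hmul : ∀ s ∈ S, ∀ w ∈ shuffleFiltration μ S k, anticommutator μ s w ∈ T) :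
    shuffleFiltration μ S (k + 1) ≤ T :=
  sup_le hT (Submodule.map₂_le.2 hmul)

end Filtration

section CharZero

variable [Field K] [CharZero K] [AddCommGroup Z] [Module K Z]

theorem mem_of_cyclic {S : Submodule K Z} {n : ℕ} (hn : n ≠ 0) {x y z : Z}
    (hx : (n : K) • (y + z) - x ∈ S) (hy : (n : K) • (z + x) - y ∈ S)
    (hz : (n : K) • (x + y) - z ∈ S) : x ∈ S := by
  have hne : ((n : K) + 1) * (2 * n - 1) ≠ 0 := by
    obtain ⟨m, rfl⟩ := Nat.exists_eq_succ_of_ne_zero hn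
    have : (((m + 2) * (2 * m + 1) : ℕ) : K) ≠ 0 := Nat.cast_ne_zero.2 (by positivity)
    convert this using 1
    push_cast
    ring
  refine (S.smul_mem_iff hne).1 ?_
  convert sub_mem (S.smul_mem (n : K) (add_mem hy hz)) (S.smul_mem ((n : K) - 1) hx) using 1
  module

variable {μ : Z →ₗ[K] Z →ₗ[K] Z} {S : Submodule K Z}

theorem mul_mem_of_shuffleDefect_mem {k : ℕ} {s w : Z} (hs : s ∈ S)
    (hw : w ∈ shuffleFiltration μ S k)
    (hdefect : shuffleDefect μ ((k + 2 : ℕ) : K) s w ∈ shuffleFiltration μ S k) :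
    μ w s ∈ shuffleFiltration μ S (k + 1) := by
  have hne : ((k + 2 : ℕ) : K) ≠ 0 := Nat.cast_ne_zero.2 (by omega)
  refine (Submodule.smul_mem_iff _ hne).1 ?_
  have hsum := add_mem (shuffleFiltration_le_succ k hdefect)
    (anticommutator_mem_shuffleFiltration hs hw)
  rwa [shuffleDefect_apply, anticommutator_comm μ s w, sub_add_cancel] at hsum

namespace IsZinbiel

variable (hμ : IsZinbiel μ) (hS : ∀ a ∈ S, ∀ b ∈ S, commutator μ a b ∈ S)
include hμ hS

theorem shuffleDefect_mem {s w : Z} (k : ℕ) (hs : s ∈ S) (hw : w ∈ shuffleFiltration μ S k) :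
    shuffleDefect μ ((k + 2 : ℕ) : K) s w ∈ shuffleFiltration μ S k := by
  induction k generalizing s w with
  | zero =>
    rw [zero_add, Nat.cast_two, shuffleDefect_two]
    exact hS w hw s hs
  | succ k ih =>
    have hmul {v t : Z} (hv : v ∈ shuffleFiltration μ S k) (ht : t ∈ S) :
        μ v t ∈ shuffleFiltration μ S (k + 1) :=
      mul_mem_of_shuffleDefect_mem ht hv (ih ht hv)
    have hcast : ((k + 1 + 2 : ℕ) : K) = ((k + 2 : ℕ) : K) + 1 := by push_cast; ring
    rw [hcast]
    suffices shuffleFiltration μ S (k + 1) ≤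
        (shuffleFiltration μ S (k + 1)).comap (shuffleDefect μ (((k + 2 : ℕ) : K) + 1) s) from
      this hw
    refine shuffleFiltration_succ_le (fun v hv => ?_) fun t ht v hv => ?_
    · have hsplit : shuffleDefect μ (((k + 2 : ℕ) : K) + 1) s v =
          shuffleDefect μ ((k + 2 : ℕ) : K) s v + μ v s := by
        simp only [shuffleDefect_apply, add_smul, one_smul]
        abel
      rw [Submodule.mem_comap, hsplit]
      exact add_mem (shuffleFiltration_le_succ k (ih hs hv)) (hmul hv hs)
    · rw [Submodule.mem_comap, hμ.shuffleDefect_anticommutator]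
      have hleft :
          μ t (shuffleDefect μ ((k + 2 : ℕ) : K) s v) ∈ shuffleFiltration μ S (k + 1) := by
        rw [← add_sub_cancel_right (μ t _), ← anticommutator_apply]
        exact sub_mem (anticommutator_mem_shuffleFiltration ht (ih hs hv)) (hmul (ih hs hv) ht)
      exact add_mem hleft (hmul hv (hS t ht s hs))

theorem mul_mem_shuffleFiltration {k : ℕ} {s w : Z} (hw : w ∈ shuffleFiltration μ S k)
    (hs : s ∈ S) : μ w s ∈ shuffleFiltration μ S (k + 1) :=
  mul_mem_of_shuffleDefect_mem hs hw (hμ.shuffleDefect_mem hS k hs hw)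

theorem rightCommutator_mem_of_mem {a b c : Z} (ha : a ∈ S) (hb : b ∈ S) (hc : c ∈ S) :
    rightCommutator μ a b c ∈ S := by
  refine (S.smul_mem_iff (two_ne_zero (α := K))).1 ?_
  rw [← hμ.commutator_commutator_add]
  exact add_mem (hS _ (hS b hb c hc) a ha) (hS _ (hS c hc a ha) b hb)

theorem rightCommutator_mem {k : ℕ} {a b u : Z} (hu : u ∈ shuffleFiltration μ S k)
    (ha : a ∈ S) (hb : b ∈ S) : rightCommutator μ a b u ∈ S := by
  induction k generalizing a b u with
  | zero => exact hμ.rightCommutator_mem_of_mem hS ha hb hu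
  | succ k ih =>
    suffices shuffleFiltration μ S (k + 1) ≤ S.comap (rightCommutator μ a b) from this hu
    refine shuffleFiltration_succ_le (fun w hw => ih hw ha hb) fun c hc w hw => ?_
    have hcyclic {a b c : Z} (ha : a ∈ S) (hb : b ∈ S) (hc : c ∈ S) :
        ((k + 2 : ℕ) : K) • (rightCommutator μ b c (anticommutator μ a w) +
          rightCommutator μ c a (anticommutator μ b w)) -
            rightCommutator μ a b (anticommutator μ c w) ∈ S := by
      convert add_mem (S.smul_mem ((k + 2 : ℕ) : K) (ih hw (hS a ha b hb) hc))
        (ih (hμ.shuffleDefect_mem hS k hc hw) ha hb) using 1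
      rw [hμ.rightCommutator_commutator, shuffleDefect_apply, map_sub, map_smul,
        anticommutator_comm μ c w]
      module
    rw [Submodule.mem_comap]
    exact mem_of_cyclic (Nat.succ_ne_zero (k + 1)) (hcyclic ha hb hc) (hcyclic hb hc ha)
      (hcyclic hc ha hb)

end IsZinbiel

end CharZero

end Abstract

section Shuffle

variable {X : Type} {M N : Type*}

/-- The sum of `F` over the shuffles of `u` and `v`, with multiplicity. -/
def shuffleSum [AddCommMonoid M] (u v : List X) (F : List X → M) : M :=
  ((shuffles u v).map F).sum

variable [AddCommMonoid M] [AddCommMonoid N]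

theorem shuffleSum_nil_left (v : List X) (F : List X → M) : shuffleSum [] v F = F v := by
  simp [shuffleSum, shuffles]

theorem shuffleSum_nil_right (v : List X) (F : List X → M) : shuffleSum v [] F = F v := by
  cases v <;> simp [shuffleSum, shuffles]

theorem shuffleSum_cons_cons (a b : X) (u v : List X) (F : List X → M) :
    shuffleSum (a :: u) (b :: v) F =
      shuffleSum u (b :: v) (fun s => F (a :: s)) +
        shuffleSum (a :: u) v (fun s => F (b :: s)) := by
  simp [shuffleSum, shuffles, Function.comp_def]

theorem map_shuffleSum {A : Type*} [FunLike A M N] [AddMonoidHomClass A M N] (φ : A)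
    (u v : List X) (F : List X → M) :
    φ (shuffleSum u v F) = shuffleSum u v (fun s => φ (F s)) := by
  simp [shuffleSum, map_list_sum, Function.comp_def]

theorem shuffleSum_add (u v : List X) (F G : List X → M) :
    shuffleSum u v (fun s => F s + G s) = shuffleSum u v F + shuffleSum u v G :=
  List.sum_map_add

theorem shuffleSum_comm (u v : List X) (F : List X → M) :
    shuffleSum u v F = shuffleSum v u F := by
  induction u, v using shuffles.induct generalizing F with
  | case1 v => rw [shuffleSum_nil_left, shuffleSum_nil_right]
  | case2 a u => rw [shuffleSum_nil_left, shuffleSum_nil_right]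
  | case3 a u b v ihu ihv => rw [shuffleSum_cons_cons, shuffleSum_cons_cons, ihu, ihv, add_comm]

theorem shuffleSum_assoc (u v w : List X) (F : List X → M) :
    shuffleSum u v (fun s => shuffleSum s w F) = shuffleSum v w (fun s => shuffleSum u s F) := by
  induction u generalizing v w F with
  | nil => simp only [shuffleSum_nil_left]
  | cons a u ihu =>
    induction v generalizing w F with
    | nil => simp only [shuffleSum_nil_left, shuffleSum_nil_right]
    | cons b v ihv =>
      induction w generalizing F with
      | nil => simp only [shuffleSum_nil_right]
      | cons c w ihw =>
        have hleft := ihw fun s => F (c :: s)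
        rw [shuffleSum_cons_cons] at hleft
        simp only [shuffleSum_cons_cons, shuffleSum_add, ihu, ihv, ← hleft]
        abel

theorem shuffleSum_singleton_append (a b : X) (v : List X) (F : List X → M) :
    shuffleSum [a] (v ++ [b]) F =
      F (v ++ [b, a]) + shuffleSum [a] v (fun s => F (s ++ [b])) := by
  induction v generalizing F with
  | nil => simp [shuffleSum_nil_left, shuffleSum_nil_right, shuffleSum_cons_cons, add_comm]
  | cons c v ih =>
    simp only [List.cons_append, shuffleSum_cons_cons, shuffleSum_nil_left, ih]
    abel

theorem shuffleSum_append_append (a b : X) (u v : List X) (F : List X → M) :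
    shuffleSum (u ++ [a]) (v ++ [b]) F =
      shuffleSum u (v ++ [b]) (fun s => F (s ++ [a])) +
        shuffleSum (u ++ [a]) v (fun s => F (s ++ [b])) := by
  induction u, v using shuffles.induct generalizing F with
  | case1 v => simp [shuffleSum_singleton_append, shuffleSum_nil_left]
  | case2 c u =>
    rw [List.nil_append, shuffleSum_comm, shuffleSum_singleton_append, shuffleSum_nil_right,
      shuffleSum_comm, List.append_assoc, List.singleton_append, add_comm]
  | case3 c u d v ihu ihv =>
    simp only [List.cons_append] at ihu ihv ⊢
    simp only [shuffleSum_cons_cons, ihu, ihv, List.cons_append]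
    abel

end Shuffle

section Free

variable {K X : Type} [Field K]

theorem ofList_val (w : Word X) : (ofList w.1 : Zin K X) = Finsupp.single w 1 := by
  obtain ⟨w, hw⟩ := w
  cases w with
  | nil => exact absurd rfl hw
  | cons a t => rfl

theorem span_ofList_append :
    Submodule.span K (Set.range fun w : List X × X => (ofList (w.1 ++ [w.2]) : Zin K X)) = ⊤ := by
  rw [← top_le_iff, ← (Finsupp.basisSingleOne (R := K) (ι := Word X)).span_eq]
  refine Submodule.span_mono ?_
  rintro _ ⟨w, rfl⟩
  refine ⟨(w.1.dropLast, w.1.getLast w.2), ?_⟩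
  rw [Finsupp.coe_basisSingleOne]
  exact (congrArg ofList (List.dropLast_append_getLast w.2)).trans (ofList_val w)

theorem zin_hom_ext {φ ψ : Zin K X →ₗ[K] Zin K X}
    (h : ∀ u a, φ (ofList (u ++ [a])) = ψ (ofList (u ++ [a]))) : φ = ψ :=
  LinearMap.ext_on_range span_ofList_append fun w => h w.1 w.2

theorem zin_hom_ext₂ {B B' : Zin K X →ₗ[K] Zin K X →ₗ[K] Zin K X}
    (h : ∀ u a v b, B (ofList (u ++ [a])) (ofList (v ++ [b])) =
      B' (ofList (u ++ [a])) (ofList (v ++ [b]))) : B = B' :=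
  LinearMap.ext_on_range span_ofList_append fun w => zin_hom_ext (h w.1 w.2)

/-- The bilinear map on `Zin K X` with prescribed values on pairs of words. -/
noncomputable def bilinearOfWords (φ : Word X → Word X → Zin K X) :
    Zin K X →ₗ[K] Zin K X →ₗ[K] Zin K X :=
  Finsupp.linearCombination K fun u => Finsupp.linearCombination K (φ u)

theorem bilinearOfWords_ofList (φ : Word X → Word X → Zin K X) (u w : Word X) :
    bilinearOfWords φ (ofList u.1) (ofList w.1) = φ u w := by
  rw [bilinearOfWords, ofList_val, ofList_val, Finsupp.linearCombination_single, one_smul,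
    Finsupp.linearCombination_single, one_smul]

/-- `zmul` as a bilinear map. -/
noncomputable def zmulₗ (K X : Type) [Field K] : Zin K X →ₗ[K] Zin K X →ₗ[K] Zin K X :=
  bilinearOfWords fun u w =>
    ofLists ((shuffles u.1 w.1.dropLast).map fun s => s ++ [w.1.getLast w.2])

/-- The bilinear map `(ub, vd) ↦ (u ⧢ v)bd` on words `u`, `v` and letters `b`, `d`: the part of
`ub ∘ vd` in which `b` ends up next to `d`. -/
noncomputable def lastLettersMul (K X : Type) [Field K] : Zin K X →ₗ[K] Zin K X →ₗ[K] Zin K X :=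
  bilinearOfWords fun u w =>
    ofLists ((shuffles u.1.dropLast w.1.dropLast).map fun s =>
      s ++ [u.1.getLast u.2, w.1.getLast w.2])

/-- `pMap` as a linear map. -/
noncomputable def pMapₗ (K X : Type) [Field K] : Zin K X →ₗ[K] Zin K X :=
  Finsupp.linearCombination K fun w =>
    if w.1.length = 1 then -(Finsupp.single w (1 : K)) else ofList (swapLast w.1)

theorem zmulₗ_apply (f g : Zin K X) : zmulₗ K X f g = zmul f g := by
  simp only [zmulₗ, bilinearOfWords, Finsupp.linearCombination_apply, zmul, Finsupp.sum,
    LinearMap.sum_apply, LinearMap.smul_apply, Finset.smul_sum, smul_smul]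

theorem commutator_zmulₗ (f g : Zin K X) : commutator (zmulₗ K X) f g = zbracket f g := by
  rw [commutator_apply, zmulₗ_apply, zmulₗ_apply, zbracket]

theorem pMapₗ_apply (f : Zin K X) : pMapₗ K X f = pMap f := rfl

theorem ofLists_map (u v : List X) (F : List X → List X) :
    (ofLists ((shuffles u v).map F) : Zin K X) = shuffleSum u v (fun s => ofList (F s)) := by
  simp [ofLists, shuffleSum, Function.comp_def]

theorem zmulₗ_ofList_append {u : List X} (hu : u ≠ []) (w : List X) (y : X) :
    zmulₗ K X (ofList u) (ofList (w ++ [y])) =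
      shuffleSum u w (fun s => ofList (s ++ [y])) := by
  refine (bilinearOfWords_ofList _ ⟨u, hu⟩ ⟨w ++ [y], by simp⟩).trans ?_
  simp only [ofLists_map, List.dropLast_concat, List.getLast_concat]

theorem zmulₗ_ofList_letter {u : List X} (hu : u ≠ []) (y : X) :
    zmulₗ K X (ofList u) (ofLetter y) = ofList (u ++ [y]) := by
  rw [← shuffleSum_nil_right u fun s => (ofList (s ++ [y]) : Zin K X), ← zmulₗ_ofList_append hu]
  rfl

theorem lastLettersMul_ofList_append (u v : List X) (b d : X) :
    lastLettersMul K X (ofList (u ++ [b])) (ofList (v ++ [d])) =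
      shuffleSum u v (fun s => ofList (s ++ [b, d])) := by
  refine (bilinearOfWords_ofList _ ⟨u ++ [b], by simp⟩ ⟨v ++ [d], by simp⟩).trans ?_
  simp only [ofLists_map, List.dropLast_concat, List.getLast_concat]

theorem pMapₗ_ofList (w : Word X) :
    pMapₗ K X (ofList w.1) = if w.1.length = 1 then -ofList w.1 else ofList (swapLast w.1) := by
  rw [pMapₗ, ofList_val, Finsupp.linearCombination_single, one_smul]

theorem pMapₗ_ofList_letter (x : X) : pMapₗ K X (ofList [x]) = -ofList [x] :=
  pMapₗ_ofList ⟨[x], by simp⟩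

theorem pMapₗ_ofList_append (u : List X) (a b : X) :
    pMapₗ K X (ofList (u ++ [a, b])) = ofList (u ++ [b, a]) := by
  refine (pMapₗ_ofList ⟨u ++ [a, b], by simp⟩).trans ?_
  simp [swapLast]

theorem isZinbiel_zmulₗ : IsZinbiel (zmulₗ K X) := by
  refine isZinbiel_of_span_eq_top span_ofList_append ?_
  rintro ⟨u, a⟩ ⟨v, b⟩ ⟨w, c⟩
  have hmul (s : List X) (x : X) (t : List X) (y : X) :
      zmulₗ K X (ofList (s ++ [x])) (ofList (t ++ [y])) =
        shuffleSum (s ++ [x]) t fun r => ofList (r ++ [y]) :=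
    zmulₗ_ofList_append (by simp) t y
  calc zmulₗ K X (ofList (u ++ [a])) (zmulₗ K X (ofList (v ++ [b])) (ofList (w ++ [c])))
      = shuffleSum (v ++ [b]) w fun s => shuffleSum (u ++ [a]) s fun t => ofList (t ++ [c]) := by
        simp only [hmul, map_shuffleSum]
    _ = shuffleSum (u ++ [a]) (v ++ [b]) fun s => shuffleSum s w fun t => ofList (t ++ [c]) :=
        (shuffleSum_assoc ..).symm
    _ = zmulₗ K X (anticommutator (zmulₗ K X) (ofList (u ++ [a])) (ofList (v ++ [b])))
          (ofList (w ++ [c])) := by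
        rw [anticommutator_apply, ← LinearMap.flip_apply, hmul, hmul, map_add, map_shuffleSum,
          map_shuffleSum, shuffleSum_append_append, shuffleSum_comm (v ++ [b]), add_comm]
        simp only [LinearMap.flip_apply, hmul]

theorem pMapₗ_lastLettersMul (f g : Zin K X) :
    pMapₗ K X (lastLettersMul K X f g) = lastLettersMul K X g f := by
  suffices (lastLettersMul K X).compr₂ (pMapₗ K X) = (lastLettersMul K X).flip from
    LinearMap.congr_fun₂ this f g
  refine zin_hom_ext₂ fun u b v d => ?_
  simp only [LinearMap.compr₂_apply, LinearMap.flip_apply, lastLettersMul_ofList_append,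
    map_shuffleSum, pMapₗ_ofList_append, shuffleSum_comm u v]

theorem zmulₗ_eq_lastLettersMul_add (u v : List X) (b c d : X) :
    zmulₗ K X (ofList (u ++ [b])) (ofList (v ++ [c, d])) =
      lastLettersMul K X (ofList (u ++ [b])) (ofList (v ++ [c, d])) +
        shuffleSum (u ++ [b]) v (fun s => ofList (s ++ [c, d])) := by
  rw [List.append_cons v c [d], zmulₗ_ofList_append (by simp), shuffleSum_append_append,
    lastLettersMul_ofList_append]
  simp only [List.append_assoc, List.singleton_append]

theorem pMapₗ_zmulₗ_add (f g : Zin K X) :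
    pMapₗ K X (zmulₗ K X f g) + lastLettersMul K X f (pMapₗ K X g) =
      lastLettersMul K X g f + zmulₗ K X f (pMapₗ K X g) := by
  suffices (zmulₗ K X).compr₂ (pMapₗ K X) + (lastLettersMul K X).compl₂ (pMapₗ K X) =
      (lastLettersMul K X).flip + (zmulₗ K X).compl₂ (pMapₗ K X) from
    LinearMap.congr_fun₂ this f g
  refine zin_hom_ext₂ fun u b v d => ?_
  simp only [LinearMap.add_apply, LinearMap.compr₂_apply, LinearMap.compl₂_apply,
    LinearMap.flip_apply]
  rcases List.eq_nil_or_concat' v with rfl | ⟨v, c, rfl⟩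
  · have hmul : zmulₗ K X (ofList (u ++ [b])) (ofList [d]) =
        lastLettersMul K X (ofList (u ++ [b])) (ofList [d]) := by
      rw [← List.nil_append [d], zmulₗ_ofList_append (by simp), lastLettersMul_ofList_append,
        shuffleSum_nil_right, shuffleSum_nil_right, List.append_assoc, List.singleton_append]
    rw [List.nil_append, pMapₗ_ofList_letter, map_neg, map_neg, hmul, pMapₗ_lastLettersMul]
  · rw [List.append_assoc, List.singleton_append, pMapₗ_ofList_append,
      zmulₗ_eq_lastLettersMul_add, zmulₗ_eq_lastLettersMul_add, map_add, pMapₗ_lastLettersMul,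
      map_shuffleSum]
    simp only [pMapₗ_ofList_append]
    abel

theorem rightCommutator_zmulₗ_ofList {u : List X} (hu : u ≠ []) (a b : X) :
    rightCommutator (zmulₗ K X) (ofLetter a) (ofLetter b) (ofList u) =
      ofList (u ++ [a, b]) - ofList (u ++ [b, a]) := by
  simp only [rightCommutator_apply, zmulₗ_ofList_letter hu,
    zmulₗ_ofList_letter (List.append_ne_nil_of_left_ne_nil hu _), List.append_assoc,
    List.singleton_append]

/-- The Lie elements `ST(X)` as a subspace. -/
def lieElements (K X : Type) [Field K] : Submodule K (Zin K X) where
  carrier := {f | InST f}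
  add_mem' := InST.add
  zero_mem' := InST.zero
  smul_mem' c _ h := InST.smul c h

theorem commutator_mem_lieElements {f g : Zin K X} (hf : f ∈ lieElements K X)
    (hg : g ∈ lieElements K X) : commutator (zmulₗ K X) f g ∈ lieElements K X := by
  rw [commutator_zmulₗ]
  exact InST.bracket hf hg

theorem ofLetter_mem_lieElements (x : X) : ofLetter x ∈ lieElements K X := InST.letter x

theorem pMap_eq_neg_of_inST {f : Zin K X} (hf : InST f) : pMap f = -f := by
  induction hf with
  | letter x => exact pMapₗ_ofList_letter x
  | zero => exact (map_zero (pMapₗ K X)).trans neg_zero.symm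
  | @add f g _ _ hf hg =>
    rw [← pMapₗ_apply] at hf hg ⊢
    rw [map_add, hf, hg, neg_add]
  | @smul c f _ hf =>
    rw [← pMapₗ_apply] at hf ⊢
    rw [map_smul, hf, smul_neg]
  | @bracket f g _ _ hf hg =>
    rw [← pMapₗ_apply] at hf hg ⊢
    have hfg := pMapₗ_zmulₗ_add f g
    have hgf := pMapₗ_zmulₗ_add g f
    rw [hf, map_neg, map_neg] at hgf
    rw [hg, map_neg, map_neg] at hfg
    rw [zbracket, ← zmulₗ_apply, ← zmulₗ_apply, map_sub]
    linear_combination (norm := module) hfg - hgf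

section CharZero

variable [CharZero K]

theorem exists_ofList_mem_shuffleFiltration (u : List X) (a : X) :
    ∃ k, ofList (u ++ [a]) ∈ shuffleFiltration (zmulₗ K X) (lieElements K X) k := by
  induction u using List.reverseRecOn generalizing a with
  | nil => exact ⟨0, ofLetter_mem_lieElements a⟩
  | append_singleton u b ih =>
    obtain ⟨k, hk⟩ := ih b
    refine ⟨k + 1, ?_⟩
    rw [← zmulₗ_ofList_letter (by simp)]
    exact isZinbiel_zmulₗ.mul_mem_shuffleFiltration
      (fun _ hf _ hg => commutator_mem_lieElements hf hg) hk (ofLetter_mem_lieElements a)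

theorem ofList_sub_ofList_mem_lieElements (u : List X) (a b : X) :
    ofList (u ++ [a, b]) - ofList (u ++ [b, a]) ∈ lieElements K X := by
  rcases List.eq_nil_or_concat' u with rfl | ⟨v, c, rfl⟩
  · have hmul (x y : X) : zmulₗ K X (ofLetter x) (ofLetter y) = ofList [x, y] :=
      zmulₗ_ofList_letter (List.cons_ne_nil x []) y
    rw [List.nil_append, List.nil_append, ← hmul, ← hmul, ← commutator_apply]
    exact commutator_mem_lieElements (ofLetter_mem_lieElements a) (ofLetter_mem_lieElements b)
  · obtain ⟨k, hk⟩ := exists_ofList_mem_shuffleFiltration (K := K) v c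
    rw [← rightCommutator_zmulₗ_ofList (by simp)]
    exact isZinbiel_zmulₗ.rightCommutator_mem (fun _ hf _ hg => commutator_mem_lieElements hf hg)
      hk (ofLetter_mem_lieElements a) (ofLetter_mem_lieElements b)

theorem bar_mem_lieElements (f : Zin K X) : bar f ∈ lieElements K X := by
  suffices ⊤ ≤ (lieElements K X).comap (LinearMap.id - pMapₗ K X) from this (x := f) trivial
  rw [← span_ofList_append, Submodule.span_le]
  rintro _ ⟨⟨u, b⟩, rfl⟩
  change ofList (u ++ [b]) - pMapₗ K X (ofList (u ++ [b])) ∈ lieElements K X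
  rcases List.eq_nil_or_concat' u with rfl | ⟨v, a, rfl⟩
  · rw [List.nil_append, pMapₗ_ofList_letter, sub_neg_eq_add]
    exact add_mem (ofLetter_mem_lieElements b) (ofLetter_mem_lieElements b)
  · rw [List.append_assoc, List.singleton_append, pMapₗ_ofList_append]
    exact ofList_sub_ofList_mem_lieElements v a b

end CharZero

end Free

end Zinbiel

/-- Lie criterion: an element `f` of the free Zinbiel algebra `Zin(X)` is a Lie element
(i.e. `f ∈ ST(X)`) if and only if `p(f) = -f`. -/
theorem lie_criterion (K X : Type) [Field K] [CharZero K] (f : Zin K X) :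
    InST f ↔ pMap f = -f := by
  refine ⟨Zinbiel.pMap_eq_neg_of_inST, fun hf => ?_⟩
  have hbar : (2 : K) • f ∈ Zinbiel.lieElements K X := by
    have := Zinbiel.bar_mem_lieElements f
    rwa [bar, hf, sub_neg_eq_add, ← two_smul K] at this
  exact ((Zinbiel.lieElements K X).smul_mem_iff two_ne_zero).1 hbar
end

section
/- Let X = {x_1,…,x_q} and let ST(X)_{m_1,…,m_q} be the multihomogeneous component of ST(X) spanned by the elements of ST(X) that are linear combinations of words containing each x_i exactly m_i times, with n = m_1 + ⋯ + m_q ≥ 2. Then dim ST(X)_{m_1,…,m_q} = Σ_{i<j} ((n−2)!/(m_1!⋯m_q!)) m_i m_j. In particular, the multilinear part (all m_i = 1, n = q) has dimension q!/2. -/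
/-!
Write `∂ x` for the deletion of a last letter `x` in a word. Each `∂ x` is a derivation of the
shuffle product, and `∂ y (f ∘ g) = f ⧢ ∂ y g`. Hence the `F` with `∂ y (∂ z F) = -∂ z (∂ y F)`,
which change sign when the last two letters of a word are interchanged, are stable under the
commutator, and `ST(X)` consists of such skew elements.

Conversely let `F` be skew of degree at least two. If `∂ x G` is skew for every letter `x`, then by
induction on the degree it lies in `ST(X)`, and so does `∑ x, [∂ x G, x] = 2 G - W G`, where
`W = ∑ x, x ⧢ ∂ x`. It remains to solve `2 G - W G = F`. In degree at least three the space of such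
`G` has the same dimension as the space of skew elements, into which `2 - W` maps it, so it suffices
that `2 - W` is injective. This rests on two facts: `W` is idempotent on skew elements, and it acts
as multiplication by `k` on the `k`-th graded piece of the shuffle algebra filtered by the powers of
the ideal generated by the letters.

A skew element with given content is determined by arbitrary coefficients on the words ending in
`y z` with `y < z`, and these are counted by multinomial coefficients.
-/

/-- A noncommutative formal power series over `R` in the letters `X`, given by its coefficient
function on words. Unlike in `Zin`, the empty word is allowed, so the shuffle product has a unit. -/
abbrev WordSeries (R X : Type*) : Type _ := List X → R

namespace WordSeries

section Shuffle

variable {R X : Type*} [CommRing R]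

/-- Deletion of a first letter `a`: the coefficient of `w` in `leftDeriv a F` is that of `a :: w`
in `F`. -/
def leftDeriv (a : X) : WordSeries R X →ₗ[R] WordSeries R X :=
  LinearMap.funLeft R R (a :: ·)

/-- Deletion of a last letter `y`: the coefficient of `w` in `rightDeriv y F` is that of `w ++ [y]`
in `F`. -/
def rightDeriv (y : X) : WordSeries R X →ₗ[R] WordSeries R X :=
  LinearMap.funLeft R R (· ++ [y])

@[simp]
theorem leftDeriv_apply (a : X) (F : WordSeries R X) (w : List X) :
    leftDeriv a F w = F (a :: w) := rfl

@[simp]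
theorem rightDeriv_apply (y : X) (F : WordSeries R X) (w : List X) :
    rightDeriv y F w = F (w ++ [y]) := rfl

theorem leftDeriv_rightDeriv (a y : X) (F : WordSeries R X) :
    leftDeriv a (rightDeriv y F) = rightDeriv y (leftDeriv a F) := rfl

theorem ext_leftDeriv {F G : WordSeries R X} (h0 : F [] = G [])
    (h : ∀ a, leftDeriv a F = leftDeriv a G) : F = G := by
  ext (_ | ⟨a, w⟩)
  · exact h0
  · exact congrFun (h a) w

theorem ext_rightDeriv {F G : WordSeries R X} (h0 : F [] = G [])
    (h : ∀ y, rightDeriv y F = rightDeriv y G) : F = G := by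
  ext w
  induction w using List.reverseRecOn with
  | nil => exact h0
  | append_singleton w y => exact congrFun (h y) w

/-- The coefficient of a word in a shuffle product, as a bilinear form. The recursion says that
deletion of a first letter is a derivation. -/
def shuffleCoeff : List X → WordSeries R X →ₗ[R] WordSeries R X →ₗ[R] R
  | [] => (LinearMap.mul R R).compl₁₂ (LinearMap.proj []) (LinearMap.proj [])
  | a :: w => (shuffleCoeff w).comp (leftDeriv a) + (shuffleCoeff w).compl₂ (leftDeriv a)

/-- The shuffle product of series. -/
def shuffle : WordSeries R X →ₗ[R] WordSeries R X →ₗ[R] WordSeries R X :=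
  LinearMap.mk₂ R (fun F G w => shuffleCoeff w F G)
    (fun _ _ _ => by ext; simp) (fun _ _ _ => by ext; simp)
    (fun _ _ _ => by ext; simp) (fun _ _ _ => by ext; simp)

@[simp]
theorem shuffle_apply_nil (F G : WordSeries R X) : shuffle F G [] = F [] * G [] := rfl

theorem leftDeriv_shuffle (a : X) (F G : WordSeries R X) :
    leftDeriv a (shuffle F G) = shuffle (leftDeriv a F) G + shuffle F (leftDeriv a G) := rfl

theorem shuffle_apply_cons (a : X) (w : List X) (F G : WordSeries R X) :
    shuffle F G (a :: w) = shuffle (leftDeriv a F) G w + shuffle F (leftDeriv a G) w := rfl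

theorem shuffle_comm (F G : WordSeries R X) : shuffle F G = shuffle G F := by
  ext w
  induction w generalizing F G with
  | nil => exact mul_comm _ _
  | cons a w ih => rw [shuffle_apply_cons, shuffle_apply_cons, ih, ih F, add_comm]

theorem rightDeriv_shuffle (y : X) (F G : WordSeries R X) :
    rightDeriv y (shuffle F G) = shuffle (rightDeriv y F) G + shuffle F (rightDeriv y G) := by
  ext w
  induction w generalizing F G with
  | nil => simp [shuffle_apply_cons]
  | cons a w ih =>
    have ih' (F G : WordSeries R X) : shuffle F G (w ++ [y]) =
        shuffle (rightDeriv y F) G w + shuffle F (rightDeriv y G) w := ih F G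
    simp only [rightDeriv_apply, Pi.add_apply, List.cons_append, shuffle_apply_cons, ih',
      leftDeriv_rightDeriv]
    abel

variable [DecidableEq X]

/-- The series with the single coefficient `1` at the word `w`. -/
def monomial (w : List X) : WordSeries R X := Pi.single w 1

theorem monomial_apply (u w : List X) : monomial (R := R) u w = if w = u then 1 else 0 :=
  Pi.single_apply u 1 w

@[simp]
theorem leftDeriv_monomial_nil (a : X) : leftDeriv a (monomial (R := R) []) = 0 := by
  ext w
  simp [monomial_apply]

@[simp]
theorem rightDeriv_monomial_nil (y : X) : rightDeriv y (monomial (R := R) []) = 0 := by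
  ext w
  simp [monomial_apply]

theorem leftDeriv_monomial_cons (a b : X) (w : List X) :
    leftDeriv a (monomial (R := R) (b :: w)) = if b = a then monomial w else 0 := by
  ext u
  obtain rfl | h := eq_or_ne b a
  · simp [monomial_apply]
  · simp [monomial_apply, h, h.symm]

theorem rightDeriv_monomial_append_singleton (y z : X) (w : List X) :
    rightDeriv y (monomial (R := R) (w ++ [z])) = if z = y then monomial w else 0 := by
  ext u
  obtain rfl | h := eq_or_ne z y
  · simp [monomial_apply]
  · simp [monomial_apply, h, h.symm]

theorem rightDeriv_monomial_singleton (y z : X) :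
    rightDeriv y (monomial (R := R) [z]) = if z = y then monomial [] else 0 :=
  rightDeriv_monomial_append_singleton y z []

@[simp]
theorem monomial_nil_shuffle (F : WordSeries R X) : shuffle (monomial []) F = F := by
  ext w
  induction w generalizing F with
  | nil => simp [monomial_apply]
  | cons a w ih => simp [shuffle_apply_cons, ih]

/-- The sum of the monomials of a list of words, counted with multiplicity. -/
def ofWords (ws : List (List X)) : WordSeries R X := (ws.map monomial).sum

theorem ofWords_map_cons_apply_nil (b : X) (ws : List (List X)) :
    ofWords (R := R) (ws.map (b :: ·)) [] = 0 := by
  induction ws with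
  | nil => rfl
  | cons w ws ih => simpa [ofWords, monomial_apply] using ih

theorem leftDeriv_ofWords_map_cons (a b : X) (ws : List (List X)) :
    leftDeriv a (ofWords (R := R) (ws.map (b :: ·))) = if b = a then ofWords ws else 0 := by
  by_cases h : b = a <;>
    simp [ofWords, map_list_sum, Function.comp_def, leftDeriv_monomial_cons, h]

theorem rightDeriv_ofWords_map_append_singleton (y z : X) (ws : List (List X)) :
    rightDeriv y (ofWords (R := R) (ws.map (· ++ [z]))) = if z = y then ofWords ws else 0 := by
  by_cases h : z = y <;>
    simp [ofWords, map_list_sum, Function.comp_def, rightDeriv_monomial_append_singleton, h]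

theorem ofWords_shuffles {X : Type} [DecidableEq X] (u v : List X) :
    ofWords (R := R) (shuffles u v) = shuffle (monomial u) (monomial v) := by
  induction u, v using shuffles.induct with
  | case1 v => simp [shuffles, ofWords]
  | case2 a u => rw [shuffle_comm]; simp [shuffles, ofWords]
  | case3 a u b v ihu ihv =>
    have happend : ofWords (R := R) (shuffles (a :: u) (b :: v)) =
        ofWords ((shuffles u (b :: v)).map (a :: ·)) +
          ofWords ((shuffles (a :: u) v).map (b :: ·)) := by
      simp [shuffles, ofWords]
    refine ext_leftDeriv ?_ fun c => ?_
    · rw [happend, Pi.add_apply, ofWords_map_cons_apply_nil, ofWords_map_cons_apply_nil]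
      simp [monomial_apply]
    · rw [happend, map_add, leftDeriv_ofWords_map_cons, leftDeriv_ofWords_map_cons, ihu, ihv,
        leftDeriv_shuffle, leftDeriv_monomial_cons, leftDeriv_monomial_cons]
      split_ifs <;> simp

end Shuffle

section Submodules

variable (R X : Type*) [CommRing R]

/-- The submodule of skew series: those that change sign when the last two letters of a word are
interchanged. -/
def skewSeries : Submodule R (WordSeries R X) :=
  ⨅ (y : X) (z : X), LinearMap.ker (rightDeriv y ∘ₗ rightDeriv z + rightDeriv z ∘ₗ rightDeriv y)

variable {X}

/-- The submodule of series whose coefficients vanish outside the set of words `S`. -/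
def supported (S : Set (List X)) : Submodule R (WordSeries R X) := Submodule.pi Sᶜ fun _ => ⊥

variable {R} {F : WordSeries R X}

theorem mem_skewSeries :
    F ∈ skewSeries R X ↔ ∀ y z, rightDeriv y (rightDeriv z F) = -rightDeriv z (rightDeriv y F) := by
  simp [skewSeries, ← eq_neg_iff_add_eq_zero]

theorem mem_supported {S : Set (List X)} : F ∈ supported R S ↔ ∀ w ∉ S, F w = 0 := by
  simp [supported]

theorem rightDeriv_mem_supported_length {n : ℕ} (hF : F ∈ supported R {w | w.length = n + 1})
    (y : X) : rightDeriv y F ∈ supported R {w | w.length = n} :=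
  mem_supported.mpr fun w hw => mem_supported.mp hF _ (by simpa using hw)

theorem finite_supported [IsNoetherianRing R] {S : Set (List X)} (hS : S.Finite) :
    Module.Finite R (supported R S) := by
  have : Finite S := hS
  refine Module.Finite.of_injective
    (LinearMap.funLeft R R (Subtype.val : S → List X) ∘ₗ (supported R S).subtype)
    fun F G hFG => Subtype.ext (funext fun w => ?_)
  by_cases hw : w ∈ S
  · exact congrFun hFG ⟨w, hw⟩
  · rw [mem_supported.mp F.2 w hw, mem_supported.mp G.2 w hw]

end Submodules

section Euler

variable {R X : Type*} [CommRing R] [DecidableEq X]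

/-- Shuffle multiplication by the letter `x`. -/
def letterMul (x : X) : WordSeries R X →ₗ[R] WordSeries R X := shuffle (monomial [x])

@[simp]
theorem letterMul_apply_nil (x : X) (F : WordSeries R X) : letterMul x F [] = 0 := by
  simp [letterMul, monomial_apply]

theorem rightDeriv_letterMul (x y : X) (F : WordSeries R X) :
    rightDeriv y (letterMul x F) = (if x = y then F else 0) + letterMul x (rightDeriv y F) := by
  rw [letterMul, rightDeriv_shuffle, rightDeriv_monomial_singleton]
  split_ifs <;> simp

theorem letterMul_apply_append_singleton (x y : X) (F : WordSeries R X) (w : List X) :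
    letterMul x F (w ++ [y]) = (if x = y then F w else 0) + letterMul x (rightDeriv y F) w := by
  rw [← rightDeriv_apply y (letterMul x F), rightDeriv_letterMul]
  split_ifs <;> rfl

theorem letterMul_comm (x y : X) (F : WordSeries R X) :
    letterMul x (letterMul y F) = letterMul y (letterMul x F) := by
  ext w
  induction w using List.reverseRecOn generalizing F with
  | nil => simp
  | append_singleton w z ih =>
    simp only [letterMul_apply_append_singleton, rightDeriv_letterMul, map_add, Pi.add_apply, ih]
    split_ifs <;> simp_all

theorem letterMul_apply_eq_zero (x : X) {F : WordSeries R X} {w : List X}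
    (h : ∀ u, u.length + 1 = w.length → F u = 0) : letterMul x F w = 0 := by
  induction w using List.reverseRecOn generalizing F with
  | nil => simp
  | append_singleton w z ih =>
    have hderiv : letterMul x (rightDeriv z F) w = 0 :=
      ih fun u hu => h (u ++ [z]) (by simpa using hu)
    rw [letterMul_apply_append_singleton, h w (by simp), hderiv, ite_self, add_zero]

variable (R X) in
/-- The powers of the ideal generated by the letters in the shuffle algebra. -/
def letterIdealPow : ℕ → Submodule R (WordSeries R X)
  | 0 => ⊤
  | k + 1 => ⨆ x, (letterIdealPow k).map (letterMul x)

theorem letterMul_mem_letterIdealPow {k : ℕ} {F : WordSeries R X} (hF : F ∈ letterIdealPow R X k)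
    (x : X) : letterMul x F ∈ letterIdealPow R X (k + 1) :=
  Submodule.mem_iSup_of_mem x (Submodule.mem_map_of_mem hF)

theorem letterIdealPow_apply_eq_zero {k : ℕ} {F : WordSeries R X} (hF : F ∈ letterIdealPow R X k)
    {w : List X} (hw : w.length < k) : F w = 0 := by
  induction k generalizing F w with
  | zero => simp at hw
  | succ k ih =>
    suffices letterIdealPow R X (k + 1) ≤ LinearMap.ker (LinearMap.proj w) from this hF
    refine iSup_le fun x => Submodule.map_le_iff_le_comap.mpr fun G hG => ?_
    exact letterMul_apply_eq_zero x fun u hu => ih hG (by omega)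

variable [Fintype X]

/-- The Euler operator `∑ x, x ⧢ ∂ₓ`, with `∂ₓ` the deletion of a last letter `x`. The `∂ₓ` are
derivations of the shuffle product, but they do not commute, so it is not the multiplication by
the length. -/
def euler : WordSeries R X →ₗ[R] WordSeries R X := ∑ x, letterMul x ∘ₗ rightDeriv x

theorem euler_apply (F : WordSeries R X) : euler F = ∑ x, letterMul x (rightDeriv x F) := by
  simp [euler]

theorem rightDeriv_euler (y : X) (F : WordSeries R X) :
    rightDeriv y (euler F) =
      rightDeriv y F + ∑ x, letterMul x (rightDeriv y (rightDeriv x F)) := by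
  simp [euler_apply, rightDeriv_letterMul, Finset.sum_add_distrib]

theorem euler_letterMul (x : X) (F : WordSeries R X) :
    euler (letterMul x F) = letterMul x F + letterMul x (euler F) := by
  simp [euler_apply, rightDeriv_letterMul, Finset.sum_add_distrib, apply_ite, letterMul_comm x]

theorem euler_mem_supported_length {n : ℕ} {F : WordSeries R X}
    (hF : F ∈ supported R {w | w.length = n}) : euler F ∈ supported R {w | w.length = n} := by
  refine mem_supported.mpr fun w hw => ?_
  rw [euler_apply, Finset.sum_apply]
  refine Finset.sum_eq_zero fun x _ => letterMul_apply_eq_zero x fun u hu => ?_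
  exact mem_supported.mp hF _ (by simpa [hu] using hw)

theorem sum_letterMul_mem_letterIdealPow_one (G : X → WordSeries R X) :
    ∑ x, letterMul x (G x) ∈ letterIdealPow R X 1 :=
  Submodule.sum_mem _ fun x _ => letterMul_mem_letterIdealPow (k := 0) Submodule.mem_top x

theorem euler_sub_nsmul_mem_letterIdealPow {k : ℕ} {F : WordSeries R X}
    (hF : F ∈ letterIdealPow R X k) : euler F - k • F ∈ letterIdealPow R X (k + 1) := by
  induction k generalizing F with
  | zero =>
    rw [zero_smul, sub_zero, euler_apply]
    exact sum_letterMul_mem_letterIdealPow_one _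
  | succ k ih =>
    suffices letterIdealPow R X (k + 1) ≤ (letterIdealPow R X (k + 2)).comap
        (euler - (k + 1) • LinearMap.id) from this hF
    refine iSup_le fun x => Submodule.map_le_iff_le_comap.mpr fun G hG => ?_
    have h : euler (letterMul x G) - (k + 1) • letterMul x G = letterMul x (euler G - k • G) := by
      rw [euler_letterMul, map_sub, map_nsmul, succ_nsmul]
      abel
    change euler (letterMul x G) - (k + 1) • letterMul x G ∈ letterIdealPow R X (k + 2)
    rw [h]
    exact letterMul_mem_letterIdealPow (ih hG) x

variable [IsAddTorsionFree R]

theorem eq_zero_of_euler_eq_zero {F : WordSeries R X} (hF : F ∈ letterIdealPow R X 1)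
    (h : euler F = 0) : F = 0 := by
  have hmem (k : ℕ) : k.factorial • F ∈ letterIdealPow R X (k + 1) := by
    induction k with
    | zero => simpa using hF
    | succ k ih =>
      have hk := euler_sub_nsmul_mem_letterIdealPow ih
      rwa [map_nsmul, h, smul_zero, zero_sub, neg_mem_iff, ← mul_smul, ← Nat.factorial_succ] at hk
  ext w
  have hw := letterIdealPow_apply_eq_zero (hmem w.length) (Nat.lt_succ_self _)
  exact (smul_eq_zero.mp hw).resolve_left w.length.factorial_ne_zero

end Euler

section Skew

variable {R X : Type*} [CommRing R] [DecidableEq X] [Fintype X]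

theorem rightDeriv_euler_of_mem_skewSeries {F : WordSeries R X} (hF : F ∈ skewSeries R X) (y : X) :
    rightDeriv y (euler F) = rightDeriv y F - euler (rightDeriv y F) := by
  rw [rightDeriv_euler, euler_apply, sub_eq_add_neg, ← Finset.sum_neg_distrib]
  simp_rw [mem_skewSeries.mp hF y, map_neg]

theorem two_smul_sub_euler_mem_skewSeries {F : WordSeries R X}
    (hF : ∀ z, rightDeriv z F ∈ skewSeries R X) : 2 • F - euler F ∈ skewSeries R X := by
  refine mem_skewSeries.mpr fun y z => ?_
  have hderiv (y z : X) : rightDeriv y (rightDeriv z (2 • F - euler F)) =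
      rightDeriv y (rightDeriv z F) - rightDeriv z (rightDeriv y F) -
        ∑ x, letterMul x (rightDeriv y (rightDeriv z (rightDeriv x F))) := by
    simp only [map_sub, map_nsmul, rightDeriv_euler, map_add, map_sum, rightDeriv_letterMul,
      Finset.sum_add_distrib, Finset.sum_ite_eq', Finset.mem_univ, if_true]
    abel
  simp_rw [hderiv, mem_skewSeries.mp (hF _) y, map_neg, Finset.sum_neg_distrib]
  abel

variable [IsAddTorsionFree R]

theorem euler_euler_of_mem_skewSeries {F : WordSeries R X} (hF : F ∈ skewSeries R X) :
    euler (euler F) = euler F := by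
  have h : euler (euler F) = 2 • euler F - euler (euler F) := by
    calc euler (euler F) = ∑ x, euler (letterMul x (rightDeriv x F)) := by
          rw [euler_apply F, map_sum]
      _ = ∑ x, (2 • letterMul x (rightDeriv x F) - letterMul x (rightDeriv x (euler F))) := by
          refine Finset.sum_congr rfl fun x _ => ?_
          rw [euler_letterMul, rightDeriv_euler_of_mem_skewSeries hF, map_sub]
          abel
      _ = 2 • euler F - euler (euler F) := by
          rw [Finset.sum_sub_distrib, ← Finset.smul_sum, ← euler_apply, ← euler_apply]
  refine nsmul_right_injective two_ne_zero ?_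
  beta_reduce
  rw [two_nsmul (euler (euler F)), ← eq_sub_iff_add_eq]
  exact h

theorem euler_eq_self_of_mem_skewSeries {F : WordSeries R X} (hF : F ∈ skewSeries R X)
    (h : F ∈ letterIdealPow R X 1) : euler F = F := by
  have hmem : euler F - F ∈ letterIdealPow R X 1 := by
    rw [euler_apply]
    exact sub_mem (sum_letterMul_mem_letterIdealPow_one _) h
  refine sub_eq_zero.mp (eq_zero_of_euler_eq_zero hmem ?_)
  rw [map_sub, euler_euler_of_mem_skewSeries hF, sub_self]

/-- Every `∂ F` lies in the ideal generated by the letters, hence is fixed by `euler`, so every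
`∂ ∂ F` is killed by `euler`. This makes `∂ ∂ ∂ F` both alternating in its two outer indices and
symmetric in its two inner ones. -/
theorem rightDeriv_rightDeriv_rightDeriv_eq_zero {F : WordSeries R X} (hF : euler F = 2 • F)
    (hs : ∀ z, rightDeriv z F ∈ skewSeries R X) (x y z : X) :
    rightDeriv x (rightDeriv y (rightDeriv z F)) = 0 := by
  have hsum (z : X) : rightDeriv z F = ∑ x, letterMul x (rightDeriv z (rightDeriv x F)) := by
    have h := rightDeriv_euler z F
    rwa [hF, map_nsmul, two_nsmul, add_right_inj] at h
  have hfix (z : X) : euler (rightDeriv z F) = rightDeriv z F := by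
    refine euler_eq_self_of_mem_skewSeries (hs z) ?_
    rw [hsum]
    exact sum_letterMul_mem_letterIdealPow_one _
  have hker (y z : X) : euler (rightDeriv y (rightDeriv z F)) = 0 := by
    have h := rightDeriv_euler_of_mem_skewSeries (hs z) y
    rwa [hfix, eq_comm, sub_eq_self] at h
  have hcomm (y z : X) : rightDeriv y (rightDeriv z F) = rightDeriv z (rightDeriv y F) := by
    have h : rightDeriv y (rightDeriv z F) - rightDeriv z (rightDeriv y F) =
        ∑ x, letterMul x (rightDeriv y (rightDeriv z (rightDeriv x F))) := by
      rw [hsum z]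
      simp [rightDeriv_letterMul, Finset.sum_add_distrib]
    refine sub_eq_zero.mp (eq_zero_of_euler_eq_zero ?_ ?_)
    · rw [h]
      exact sum_letterMul_mem_letterIdealPow_one _
    · rw [map_sub, hker, hker, sub_zero]
  have hskew (x y z : X) : rightDeriv x (rightDeriv y (rightDeriv z F)) =
      -rightDeriv y (rightDeriv x (rightDeriv z F)) := mem_skewSeries.mp (hs z) x y
  refine self_eq_neg.mp ?_
  calc rightDeriv x (rightDeriv y (rightDeriv z F))
      = -rightDeriv y (rightDeriv z (rightDeriv x F)) := by rw [hskew, hcomm x z]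
    _ = rightDeriv z (rightDeriv x (rightDeriv y F)) := by rw [hskew y z, neg_neg, hcomm y x]
    _ = -rightDeriv x (rightDeriv y (rightDeriv z F)) := by rw [hskew z x, hcomm z y]

end Skew

section Rotation

variable {R X : Type*} [CommRing R]

/-- Move the last letter of a word two places to the left (identity on words with fewer than three
letters). -/
def rotateLast (l : List X) : List X :=
  match l.reverse with
  | z :: y :: x :: w => (y :: x :: z :: w).reverse
  | _ => l

@[simp]
theorem rotateLast_append (w : List X) (x y z : X) :
    rotateLast (w ++ [x, y, z]) = w ++ [z, x, y] := by
  simp [rotateLast]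

theorem length_rotateLast (l : List X) : (rotateLast l).length = l.length := by
  unfold rotateLast
  split
  · next h => rw [List.length_reverse, ← l.length_reverse, h]; simp
  · rfl

/-- The action of `rotateLast` on series, which rotates three successive deletions of last
letters. -/
def rotate : WordSeries R X →ₗ[R] WordSeries R X := LinearMap.funLeft R R rotateLast

theorem rightDeriv_rightDeriv_rightDeriv_rotate (x y z : X) (F : WordSeries R X) :
    rightDeriv x (rightDeriv y (rightDeriv z (rotate F))) =
      rightDeriv z (rightDeriv x (rightDeriv y F)) := by
  ext w
  simp [rotate, LinearMap.funLeft_apply]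

theorem rotate_mem_supported_length {n : ℕ} {F : WordSeries R X}
    (hF : F ∈ supported R {w | w.length = n}) : rotate F ∈ supported R {w | w.length = n} :=
  mem_supported.mpr fun w hw => mem_supported.mp hF (rotateLast w) (by simpa [length_rotateLast])

theorem rightDeriv_rotate_mem_skewSeries {F : WordSeries R X} (hF : F ∈ skewSeries R X) (z : X) :
    rightDeriv z (rotate F) ∈ skewSeries R X := by
  refine mem_skewSeries.mpr fun x y => ?_
  rw [rightDeriv_rightDeriv_rightDeriv_rotate, rightDeriv_rightDeriv_rightDeriv_rotate,
    mem_skewSeries.mp hF x y, map_neg]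

theorem eq_zero_of_rightDeriv_rightDeriv_rightDeriv_eq_zero {n : ℕ} {F : WordSeries R X}
    (hF : F ∈ supported R {w | w.length = n + 3})
    (h : ∀ x y z, rightDeriv x (rightDeriv y (rightDeriv z F)) = 0) : F = 0 := by
  have hnil {k : ℕ} {G : WordSeries R X} (hG : G ∈ supported R {w | w.length = k + 1}) :
      G [] = 0 := mem_supported.mp hG [] (by simp)
  refine ext_rightDeriv (hnil hF) fun z => ?_
  have hz := rightDeriv_mem_supported_length hF z
  refine ext_rightDeriv (hnil hz) fun y => ?_
  exact ext_rightDeriv (hnil (rightDeriv_mem_supported_length hz y)) fun x => by simp [h x y z]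

theorem rightDeriv_rightDeriv_eq_zero {F : WordSeries R X}
    (hF : F ∈ supported R {w | w.length = 1}) (x y : X) : rightDeriv x (rightDeriv y F) = 0 := by
  ext w
  exact mem_supported.mp hF (w ++ [x] ++ [y]) (by simp)

theorem mem_skewSeries_of_mem_supported_length_one {F : WordSeries R X}
    (hF : F ∈ supported R {w | w.length = 1}) : F ∈ skewSeries R X :=
  mem_skewSeries.mpr fun y z => by simp [rightDeriv_rightDeriv_eq_zero hF]

variable [DecidableEq X] [Fintype X]

theorem euler_eq_self_of_mem_supported_length_one {F : WordSeries R X}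
    (hF : F ∈ supported R {w | w.length = 1}) : euler F = F := by
  refine ext_rightDeriv ?_ fun y => ?_
  · simp [euler_apply, mem_supported.mp hF [] (by simp)]
  · simp [rightDeriv_euler, rightDeriv_rightDeriv_eq_zero hF]

theorem euler_eq_zero_of_mem_supported_length_two {F : WordSeries R X}
    (hskew : F ∈ skewSeries R X) (hF : F ∈ supported R {w | w.length = 2}) : euler F = 0 := by
  refine ext_rightDeriv (by simp [euler_apply]) fun y => ?_
  rw [rightDeriv_euler_of_mem_skewSeries hskew, map_zero,
    euler_eq_self_of_mem_supported_length_one (rightDeriv_mem_supported_length hF y), sub_self]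

variable {K : Type*} [Field K] [CharZero K]

/-- `F ↦ 2 • rotate F - euler (rotate F)` is an injective, hence bijective, endomorphism of the
skew series that are homogeneous of degree at least three. -/
theorem exists_two_smul_sub_euler_eq_of_length_add_three {n : ℕ} {F : WordSeries K X}
    (hskew : F ∈ skewSeries K X) (hF : F ∈ supported K {w | w.length = n + 3}) :
    ∃ G ∈ supported K {w | w.length = n + 3},
      (∀ z, rightDeriv z G ∈ skewSeries K X) ∧ 2 • G - euler G = F := by
  have : IsAddTorsionFree K := .of_isDomain_charZero
  let V := skewSeries K X ⊓ supported K {w | w.length = n + 3}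
  have : FiniteDimensional K (supported K {w : List X | w.length = n + 3}) :=
    finite_supported (List.finite_length_eq X (n + 3))
  have : FiniteDimensional K V := Submodule.finiteDimensional_inf_right _ _
  let φ : WordSeries K X →ₗ[K] WordSeries K X := (2 • LinearMap.id - euler) ∘ₗ rotate
  have hφ : ∀ F ∈ V, φ F ∈ V := fun F hF =>
    ⟨two_smul_sub_euler_mem_skewSeries (rightDeriv_rotate_mem_skewSeries hF.1),
      sub_mem (nsmul_mem (rotate_mem_supported_length hF.2) 2)
        (euler_mem_supported_length (rotate_mem_supported_length hF.2))⟩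
  have hinj : Function.Injective (φ.restrict hφ) := by
    refine (injective_iff_map_eq_zero _).mpr fun ⟨F, hF⟩ h0 => Subtype.ext ?_
    have heuler : euler (rotate F) = 2 • rotate F := (sub_eq_zero.mp (congrArg Subtype.val h0)).symm
    refine eq_zero_of_rightDeriv_rightDeriv_rightDeriv_eq_zero hF.2 fun x y z => ?_
    rw [← rightDeriv_rightDeriv_rightDeriv_rotate]
    exact rightDeriv_rightDeriv_rightDeriv_eq_zero heuler
      (rightDeriv_rotate_mem_skewSeries hF.1) y z x
  obtain ⟨⟨G, hG⟩, hGF⟩ := LinearMap.surjective_of_injective hinj ⟨F, hskew, hF⟩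
  exact ⟨rotate G, rotate_mem_supported_length hG.2, rightDeriv_rotate_mem_skewSeries hG.1,
    congrArg Subtype.val hGF⟩

theorem exists_two_smul_sub_euler_eq {n : ℕ} {F : WordSeries K X}
    (hskew : F ∈ skewSeries K X) (hF : F ∈ supported K {w | w.length = n + 2}) :
    ∃ G ∈ supported K {w | w.length = n + 2},
      (∀ z, rightDeriv z G ∈ skewSeries K X) ∧ 2 • G - euler G = F := by
  cases n with
  | zero =>
    have hG : (2⁻¹ : K) • F ∈ supported K {w | w.length = 2} := Submodule.smul_mem _ _ hF
    refine ⟨(2⁻¹ : K) • F, hG, fun z => ?_, ?_⟩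
    · exact mem_skewSeries_of_mem_supported_length_one (rightDeriv_mem_supported_length hG z)
    · rw [map_smul, euler_eq_zero_of_mem_supported_length_two hskew hF, smul_zero, sub_zero,
        ← ofNat_smul_eq_nsmul K 2, smul_inv_smul₀ two_ne_zero]
  | succ n => exact exists_two_smul_sub_euler_eq_of_length_add_three hskew hF

end Rotation

end WordSeries

namespace Zin

open WordSeries

variable {K X : Type} [Field K]

/-- The inclusion of the free Zinbiel algebra in the series, whose coefficient at the empty word
is zero. -/
noncomputable def toSeries : Zin K X →ₗ[K] WordSeries K X :=
  Finsupp.lcoeFun ∘ₗ Finsupp.lmapDomain K K fun w : Word X => w.1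

theorem toSeries_apply_val (f : Zin K X) (w : Word X) : toSeries f w.1 = f w :=
  Finsupp.mapDomain_apply Subtype.val_injective f w

@[simp]
theorem toSeries_apply_nil (f : Zin K X) : toSeries f [] = 0 :=
  Finsupp.mapDomain_of_notMem_range f [] fun ⟨w, hw⟩ => w.2 hw

theorem toSeries_injective : Function.Injective (toSeries (K := K) (X := X)) := fun f g h => by
  ext w
  rw [← toSeries_apply_val, h, toSeries_apply_val]

theorem toSeries_mem_supported {S : Set (List X)} {f : Zin K X} :
    toSeries f ∈ supported K S ↔ ∀ w ∈ f.support, w.1 ∈ S := by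
  rw [mem_supported]
  refine ⟨fun h w hw => ?_, fun h w hw => ?_⟩
  · by_contra hS
    exact Finsupp.mem_support_iff.mp hw (by rw [← toSeries_apply_val, h w.1 hS])
  · obtain rfl | hnil := eq_or_ne w []
    · exact toSeries_apply_nil f
    · rw [toSeries_apply_val f ⟨w, hnil⟩]
      exact Finsupp.notMem_support_iff.mp fun hmem => hw (h _ hmem)

section Single

variable [DecidableEq X]

theorem toSeries_single (w : Word X) (c : K) :
    toSeries (Finsupp.single w c) = c • monomial w.1 := by
  simp [toSeries, Finsupp.mapDomain_single, Finsupp.single_eq_pi_single, monomial, ← Pi.single_smul]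

@[simp]
theorem toSeries_ofLetter (x : X) : toSeries (ofLetter (K := K) x) = monomial [x] :=
  (toSeries_single _ 1).trans (one_smul K _)

theorem toSeries_ofLists {ws : List (List X)} (hws : [] ∉ ws) :
    toSeries (ofLists (K := K) ws) = ofWords ws := by
  rw [ofLists, ofWords, map_list_sum, List.map_map]
  refine congrArg List.sum (List.map_congr_left fun w hw => ?_)
  cases w with
  | nil => exact absurd hw hws
  | cons x w => exact (toSeries_single _ 1).trans (one_smul K _)

end Single

section Bracket

theorem rightDeriv_toSeries_zmul (y : X) (f g : Zin K X) :
    rightDeriv y (toSeries (zmul f g)) = shuffle (toSeries f) (rightDeriv y (toSeries g)) := by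
  classical
  have hsingle (u w : Word X) (c d : K) :
      rightDeriv y (toSeries ((c * d) •
          ofLists ((shuffles u.1 w.1.dropLast).map fun s => s ++ [w.1.getLast w.2]))) =
        shuffle (toSeries (Finsupp.single u c)) (rightDeriv y (toSeries (Finsupp.single w d))) := by
    have hw : monomial (R := K) w.1 = monomial (w.1.dropLast ++ [w.1.getLast w.2]) := by
      rw [List.dropLast_append_getLast]
    rw [map_smul, map_smul, toSeries_ofLists (by simp), rightDeriv_ofWords_map_append_singleton,
      ofWords_shuffles, toSeries_single, toSeries_single, hw, map_smul, map_smul, map_smul,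
      LinearMap.smul_apply, rightDeriv_monomial_append_singleton, smul_smul, mul_comm]
    split_ifs <;> simp
  conv_rhs => rw [← f.sum_single, ← g.sum_single]
  simp only [zmul, map_finsuppSum, hsingle, LinearMap.finsupp_sum_apply]
  exact Finsupp.sum_comm _ _ _

theorem rightDeriv_toSeries_zbracket (y : X) (f g : Zin K X) :
    rightDeriv y (toSeries (zbracket f g)) =
      shuffle (toSeries f) (rightDeriv y (toSeries g)) -
        shuffle (toSeries g) (rightDeriv y (toSeries f)) := by
  rw [zbracket, map_sub, map_sub, rightDeriv_toSeries_zmul, rightDeriv_toSeries_zmul]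

variable [DecidableEq X]

theorem rightDeriv_toSeries_zbracket_ofLetter (x y : X) (f : Zin K X) :
    rightDeriv y (toSeries (zbracket f (ofLetter x))) =
      (if x = y then toSeries f else 0) - letterMul x (rightDeriv y (toSeries f)) := by
  rw [rightDeriv_toSeries_zbracket, toSeries_ofLetter, rightDeriv_monomial_singleton, letterMul]
  split_ifs
  · rw [shuffle_comm (toSeries f), monomial_nil_shuffle]
  · rw [map_zero]

theorem toSeries_sum_zbracket_ofLetter [Fintype X] {f : X → Zin K X} {G : WordSeries K X}
    (hG : G [] = 0) (hf : ∀ x, toSeries (f x) = rightDeriv x G) :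
    toSeries (∑ x, zbracket (f x) (ofLetter x)) = 2 • G - euler G := by
  refine ext_rightDeriv ?_ fun y => ?_
  · simp [euler_apply, hG]
  · simp only [map_sum, map_sub, map_nsmul, rightDeriv_toSeries_zbracket_ofLetter, hf,
      rightDeriv_euler, Finset.sum_sub_distrib, Finset.sum_ite_eq', Finset.mem_univ, if_true]
    abel

end Bracket

section SpecialTortkara

theorem toSeries_mem_skewSeries {f : Zin K X} (hf : InST f) : toSeries f ∈ skewSeries K X := by
  classical
  induction hf with
  | letter x =>
    refine mem_skewSeries.mpr fun y z => ?_
    simp only [toSeries_ofLetter, rightDeriv_monomial_singleton]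
    split_ifs <;> simp
  | zero => simp
  | add _ _ hf hg => simpa using add_mem hf hg
  | smul c _ hf => simpa using Submodule.smul_mem _ c hf
  | @bracket f g _ _ hf hg =>
    refine mem_skewSeries.mpr fun y z => ?_
    simp only [rightDeriv_toSeries_zbracket, map_sub, rightDeriv_shuffle,
      mem_skewSeries.mp hf y z, mem_skewSeries.mp hg y z, map_neg,
      shuffle_comm (rightDeriv y (toSeries g)), shuffle_comm (rightDeriv y (toSeries f))]
    abel

variable (K X) in
/-- The free special Tortkara algebra, that is `InST`, as a subspace. -/
def freeSpecialTortkara : Submodule K (Zin K X) where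
  carrier := {f | InST f}
  zero_mem' := .zero
  add_mem' := .add
  smul_mem' c _ := .smul c

variable [Finite X]

theorem mem_map_toSeries_of_mem_supported_length_one {F : WordSeries K X}
    (hF : F ∈ supported K {w | w.length = 1}) : F ∈ (freeSpecialTortkara K X).map toSeries := by
  classical
  cases nonempty_fintype X
  refine ⟨∑ x, F [x] • ofLetter x,
    Submodule.sum_mem _ fun x _ => Submodule.smul_mem _ _ (InST.letter x), ?_⟩
  ext w
  by_cases hw : w.length = 1
  · obtain ⟨x, rfl⟩ := List.length_eq_one_iff.mp hw
    simp [monomial_apply]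
  · have hne (x : X) : w ≠ [x] := fun h => hw (by simp [h])
    simp [monomial_apply, hne, mem_supported.mp hF w hw]

variable [CharZero K]

theorem mem_map_toSeries_of_mem_skewSeries {n : ℕ} {F : WordSeries K X}
    (hskew : F ∈ skewSeries K X) (hF : F ∈ supported K {w | w.length = n + 1}) :
    F ∈ (freeSpecialTortkara K X).map toSeries := by
  classical
  cases nonempty_fintype X
  induction n generalizing F with
  | zero => exact mem_map_toSeries_of_mem_supported_length_one hF
  | succ n ih =>
    obtain ⟨G, hG, hGskew, rfl⟩ := exists_two_smul_sub_euler_eq hskew hF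
    choose f hf hfG using fun x => ih (hGskew x) (rightDeriv_mem_supported_length hG x)
    refine ⟨∑ x, zbracket (f x) (ofLetter x), ?_, ?_⟩
    · exact Submodule.sum_mem _ fun x _ => InST.bracket (hf x) (InST.letter x)
    · exact toSeries_sum_zbracket_ofLetter (mem_supported.mp hG [] (by simp)) hfG

theorem map_toSeries_span_inST {n : ℕ} {S : Set (List X)} (hS : ∀ w ∈ S, w.length = n + 1) :
    (Submodule.span K {f : Zin K X | InST f ∧ ∀ w ∈ f.support, w.1 ∈ S}).map toSeries =
      skewSeries K X ⊓ supported K S := by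
  rw [Submodule.map_span, ← Submodule.span_eq (skewSeries K X ⊓ supported K S)]
  congr 1
  ext F
  constructor
  · rintro ⟨f, ⟨hf, hfS⟩, rfl⟩
    exact ⟨toSeries_mem_skewSeries hf, toSeries_mem_supported.mpr hfS⟩
  · rintro ⟨hskew, hF⟩
    have hlen : F ∈ supported K {w | w.length = n + 1} :=
      mem_supported.mpr fun w hw => mem_supported.mp hF w fun hwS => hw (hS w hwS)
    obtain ⟨f, hf, rfl⟩ := mem_map_toSeries_of_mem_skewSeries hskew hlen
    exact ⟨f, ⟨hf, toSeries_mem_supported.mp hF⟩, rfl⟩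

theorem finrank_span_inST {n : ℕ} {S : Set (List X)} (hS : ∀ w ∈ S, w.length = n + 1) :
    Module.finrank K
        (Submodule.span K {f : Zin K X | InST f ∧ ∀ w ∈ f.support, w.1 ∈ S}) =
      Module.finrank K ↥(skewSeries K X ⊓ supported K S) := by
  rw [← map_toSeries_span_inST hS]
  exact (Submodule.equivMapOfInjective _ toSeries_injective _).finrank_eq

end SpecialTortkara

end Zin

section SwapLast

theorem exists_eq_append_of_two_le_length {X : Type*} {w : List X} (hw : 2 ≤ w.length) :
    ∃ u y z, w = u ++ [y, z] := by
  obtain ⟨v, z, rfl⟩ := w.eq_nil_or_concat'.resolve_left (by rintro rfl; simp at hw)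
  obtain ⟨u, y, rfl⟩ := v.eq_nil_or_concat'.resolve_left (by rintro rfl; simp at hw)
  exact ⟨u, y, z, by simp⟩

variable {X : Type}

@[simp]
theorem swapLast_append (w : List X) (y z : X) : swapLast (w ++ [y, z]) = w ++ [z, y] := by
  simp [swapLast]

theorem swapLast_perm (w : List X) : (swapLast w).Perm w := by
  obtain hw | hw := lt_or_ge w.length 2
  · match w with
    | [] | [_] => rfl
  · obtain ⟨u, y, z, rfl⟩ := exists_eq_append_of_two_le_length hw
    rw [swapLast_append]
    exact (List.Perm.swap y z []).append_left u

end SwapLast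

namespace WordSeries

section Dimension

variable {R : Type*} [CommRing R]

theorem apply_append_of_mem_skewSeries {X : Type*} {F : WordSeries R X}
    (hF : F ∈ skewSeries R X) (w : List X) (y z : X) : F (w ++ [y, z]) = -F (w ++ [z, y]) := by
  simpa using congrFun (mem_skewSeries.mp hF y z) w

variable {X : Type} {S : Set (List X)}

theorem exists_mem_skewSeries_apply_eq (hswap : ∀ w, swapLast w ∈ S → w ∈ S) {ι : Type*}
    {e : ι → List X} (he : e.Injective) (heS : ∀ p, e p ∈ S) (hne : ∀ p q, e p ≠ swapLast (e q))
    (c : ι → R) : ∃ F ∈ skewSeries R X ⊓ supported R S, ∀ p, F (e p) = c p := by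
  let F : WordSeries R X := Function.extend e c 0
  have hF {w : List X} (hw : w ∉ S) : F w = 0 :=
    Function.extend_apply' _ _ _ fun ⟨p, hp⟩ => hw (hp ▸ heS p)
  refine ⟨F - F ∘ swapLast, ⟨?_, ?_⟩, fun q => ?_⟩
  · exact mem_skewSeries.mpr fun y z => funext fun w => by simp
  · exact mem_supported.mpr fun w hw => by simp [hF hw, hF (mt (hswap w) hw)]
  · have hq : F (swapLast (e q)) = 0 :=
      Function.extend_apply' _ _ _ fun ⟨p, hp⟩ => hne p q hp
    simp [F, he.extend_apply, hq]

variable [LinearOrder X]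

theorem eq_zero_of_mem_skewSeries [IsAddTorsionFree R] (hS : ∀ w ∈ S, 2 ≤ w.length)
    {F : WordSeries R X} (hskew : F ∈ skewSeries R X) (hF : F ∈ supported R S)
    (h : ∀ w y z, y < z → w ++ [y, z] ∈ S → F (w ++ [y, z]) = 0) : F = 0 := by
  ext w
  by_cases hw : w ∈ S
  swap
  · exact mem_supported.mp hF w hw
  obtain ⟨u, y, z, rfl⟩ := exists_eq_append_of_two_le_length (hS w hw)
  obtain hlt | rfl | hgt := lt_trichotomy y z
  · exact h u y z hlt hw
  · exact self_eq_neg.mp (apply_append_of_mem_skewSeries hskew u y y)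
  · rw [apply_append_of_mem_skewSeries hskew]
    by_cases hw' : u ++ [z, y] ∈ S
    · rw [h u z y hgt hw', Pi.zero_apply, neg_zero]
    · rw [mem_supported.mp hF _ hw', Pi.zero_apply, neg_zero]

theorem finrank_skewSeries_inf_supported [Nontrivial R] [IsAddTorsionFree R] [Fintype X]
    [LocallyFiniteOrderTop X] (hfin : S.Finite) (hS : ∀ w ∈ S, 2 ≤ w.length)
    (hswap : ∀ w, swapLast w ∈ S → w ∈ S) :
    Module.finrank R ↥(skewSeries R X ⊓ supported R S) =
      ∑ y, ∑ z ∈ Finset.Ioi y, Nat.card {w : List X // w ++ [y, z] ∈ S} := by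
  let ι := Σ y : X, Σ z : Finset.Ioi y, {w : List X // w ++ [y, z.1] ∈ S}
  let e : ι → List X := fun p => p.2.2.1 ++ [p.1, p.2.1.1]
  have he : e.Injective := by
    rintro ⟨y, ⟨z, hz⟩, w, hw⟩ ⟨y', ⟨z', hz'⟩, w', hw'⟩ h
    obtain ⟨rfl, hyz⟩ := List.append_inj' h rfl
    obtain ⟨rfl, rfl⟩ : y = y' ∧ z = z' := by simpa using hyz
    rfl
  have heS (p : ι) : e p ∈ S := p.2.2.2
  have hne (p q : ι) : e p ≠ swapLast (e q) := fun h => by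
    have hyz : p.1 = q.2.1.1 ∧ p.2.1.1 = q.1 := by
      simpa [e] using (List.append_inj' (h.trans (swapLast_append _ _ _)) rfl).2
    have hp : p.1 < p.2.1.1 := Finset.mem_Ioi.mp p.2.1.2
    have hq : q.1 < q.2.1.1 := Finset.mem_Ioi.mp q.2.1.2
    exact lt_asymm (hp.trans_eq hyz.2) (hq.trans_eq hyz.1.symm)
  have hword (y z : X) : Finite {w : List X // w ++ [y, z] ∈ S} :=
    hfin.preimage (List.append_left_injective [y, z]).injOn
  have : Finite ι := inferInstance
  have := Fintype.ofFinite ι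
  let coord := LinearMap.funLeft R R e ∘ₗ (skewSeries R X ⊓ supported R S).subtype
  have hcoord : Function.Bijective coord := by
    refine ⟨(injective_iff_map_eq_zero _).mpr fun ⟨F, hF⟩ h0 => Subtype.ext ?_, fun c => ?_⟩
    · exact eq_zero_of_mem_skewSeries hS hF.1 hF.2 fun w y z hyz hw =>
        congrFun h0 ⟨y, ⟨z, Finset.mem_Ioi.mpr hyz⟩, w, hw⟩
    · obtain ⟨F, hF, hFc⟩ := exists_mem_skewSeries_apply_eq hswap he heS hne c
      exact ⟨⟨F, hF⟩, funext hFc⟩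
  rw [(LinearEquiv.ofBijective coord hcoord).finrank_eq, Module.finrank_fintype_fun_eq_card,
    ← Nat.card_eq_fintype_card, Nat.card_sigma]
  simp_rw [Nat.card_sigma]
  exact Finset.sum_congr rfl fun y _ => Finset.sum_coe_sort (Finset.Ioi y)
    fun z => Nat.card {w : List X // w ++ [y, z] ∈ S}

end Dimension

end WordSeries

section WordCount

variable {X : Type*}

theorem finite_setOf_coe_eq [Finite X] (s : Multiset X) :
    {w : List X | (w : Multiset X) = s}.Finite :=
  (List.finite_length_eq X s.card).subset fun w hw => by simp [← hw.out]

variable [Fintype X] [DecidableEq X]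

theorem prod_factorial_count_cons (x : X) (s : Multiset X) :
    ∏ y, ((x ::ₘ s).count y).factorial = (s.count x + 1) * ∏ y, (s.count y).factorial := by
  rw [← Finset.mul_prod_erase _ _ (Finset.mem_univ x), ← Finset.mul_prod_erase _ _
    (Finset.mem_univ x), Multiset.count_cons_self, Nat.factorial_succ, mul_assoc]
  congr 2
  refine Finset.prod_congr rfl fun y hy => ?_
  rw [Multiset.count_cons_of_ne (Finset.ne_of_mem_erase hy)]

theorem card_cons_eq_mul_prod_factorial {α : Type*} (f : α → Multiset X) {x : X} {s : Multiset X}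
    {c : ℕ} (h : ∀ t, s = x ::ₘ t → Nat.card {a // f a = t} * ∏ y, (t.count y).factorial = c) :
    Nat.card {a // x ::ₘ f a = s} * ∏ y, (s.count y).factorial = s.count x * c := by
  by_cases hx : x ∈ s
  · obtain ⟨t, rfl⟩ := Multiset.exists_cons_of_mem hx
    simp_rw [Multiset.cons_inj_right, prod_factorial_count_cons, Multiset.count_cons_self,
      ← h t rfl]
    ring
  · have : IsEmpty {a // x ::ₘ f a = s} := ⟨fun a => hx (a.2 ▸ Multiset.mem_cons_self x _)⟩
    rw [Nat.card_of_isEmpty, Multiset.count_eq_zero_of_notMem hx, zero_mul, zero_mul]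

theorem card_coe_eq_mul_prod_factorial (s : Multiset X) :
    Nat.card {w : List X // (w : Multiset X) = s} * ∏ x, (s.count x).factorial =
      s.card.factorial := by
  induction hn : s.card generalizing s with
  | zero =>
    obtain rfl := Multiset.card_eq_zero.mp hn
    simp
  | succ n ih =>
    have hfirst (x : X) : Nat.card {w : List X // x ::ₘ (w : Multiset X) = s} *
        ∏ y, (s.count y).factorial = s.count x * n.factorial :=
      card_cons_eq_mul_prod_factorial _ fun t ht => ih t (by simpa [ht] using hn)
    have hfinite (x : X) : Finite {w : List X // x ::ₘ (w : Multiset X) = s} :=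
      (finite_setOf_coe_eq s).preimage (List.cons_injective (a := x)).injOn
    let e : {w : List X // (w : Multiset X) = s} ≃
        Σ x, {w : List X // x ::ₘ (w : Multiset X) = s} :=
      { toFun := fun
          | ⟨[], hw⟩ => absurd hn (by simp [← hw])
          | ⟨x :: w, hw⟩ => ⟨x, w, hw⟩
        invFun := fun p => ⟨p.1 :: p.2.1, p.2.2⟩
        left_inv := fun
          | ⟨[], hw⟩ => absurd hn (by simp [← hw])
          | ⟨_ :: _, _⟩ => rfl
        right_inv := fun _ => rfl }
    rw [Nat.card_congr e, Nat.card_sigma, Finset.sum_mul, Finset.sum_congr rfl fun x _ => hfirst x,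
      ← Finset.sum_mul, Multiset.sum_count_eq_card fun x _ => Finset.mem_univ x, hn,
      Nat.factorial_succ]

theorem card_append_pair_eq_mul_prod_factorial {x y : X} (hxy : x ≠ y) (s : Multiset X) :
    Nat.card {w : List X // ((w ++ [x, y] : List X) : Multiset X) = s} *
      ∏ z, (s.count z).factorial = (s.card - 2).factorial * s.count x * s.count y := by
  have hcoe (w : List X) : ((w ++ [x, y] : List X) : Multiset X) = x ::ₘ y ::ₘ (w : Multiset X) :=
    Multiset.coe_eq_coe.mpr List.perm_append_comm
  have hy (t : Multiset X) (ht : s = x ::ₘ t) :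
      Nat.card {w : List X // y ::ₘ (w : Multiset X) = t} * ∏ z, (t.count z).factorial =
        s.count y * (s.card - 2).factorial := by
    rw [ht, Multiset.count_cons_of_ne hxy.symm]
    refine card_cons_eq_mul_prod_factorial _ fun u hu => ?_
    rw [card_coe_eq_mul_prod_factorial, hu, Multiset.card_cons, Multiset.card_cons]
    rfl
  simp_rw [hcoe]
  rw [card_cons_eq_mul_prod_factorial _ hy]
  ring

end WordCount

section Multihomogeneous

theorem exists_multiset_count_eq {X : Type*} [Fintype X] [DecidableEq X] (m : X → ℕ) :
    ∃ s : Multiset X, s.card = ∑ x, m x ∧ ∀ x, s.count x = m x :=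
  ⟨∑ x, Multiset.replicate (m x) x, by simp, by
    simp [Multiset.count_sum', Multiset.count_replicate]⟩

variable {K : Type} [Field K] [CharZero K] {X : Type} [Fintype X] [LinearOrder X]
  [LocallyFiniteOrderTop X]

theorem Zin.finrank_span_inST_mul_prod_factorial (m : X → ℕ) (hm : 2 ≤ ∑ x, m x) :
    Module.finrank K (Submodule.span K
        {f : Zin K X | InST f ∧ ∀ w ∈ f.support, ∀ x, w.1.count x = m x}) *
      ∏ x, (m x).factorial =
      ∑ y, ∑ z ∈ Finset.Ioi y, (∑ x, m x - 2).factorial * m y * m z := by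
  obtain ⟨s, hcard, hcount⟩ := exists_multiset_count_eq m
  let S : Set (List X) := {w | ∀ x, w.count x = m x}
  have hS : S = {w : List X | (w : Multiset X) = s} := by
    simp [S, Multiset.ext, hcount]
  have hlength (w : List X) (hw : w ∈ S) : w.length = ∑ x, m x := by
    rw [hS] at hw
    rw [← hcard, ← hw.out, Multiset.coe_card]
  have hswap (w : List X) (hw : swapLast w ∈ S) : w ∈ S := fun x =>
    ((swapLast_perm w).count_eq x).symm.trans (hw x)
  have : IsAddTorsionFree K := .of_isDomain_charZero
  have hrank : Module.finrank K (Submodule.span K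
      {f : Zin K X | InST f ∧ ∀ w ∈ f.support, ∀ x, w.1.count x = m x}) =
        ∑ y, ∑ z ∈ Finset.Ioi y, Nat.card {w : List X // w ++ [y, z] ∈ S} :=
    (Zin.finrank_span_inST (S := S) (n := ∑ x, m x - 1) fun w hw => by
      rw [hlength w hw]; omega).trans
    (WordSeries.finrank_skewSeries_inf_supported (hS ▸ finite_setOf_coe_eq s)
      (fun w hw => hm.trans_eq (hlength w hw).symm) hswap)
  rw [hrank, hS]
  simp_rw [Finset.sum_mul, ← hcard, ← hcount]
  exact Finset.sum_congr rfl fun y _ => Finset.sum_congr rfl fun z hz =>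
    card_append_pair_eq_mul_prod_factorial (Finset.mem_Ioi.mp hz).ne s

end Multihomogeneous

theorem sum_card_Ioi_mul_two (q : ℕ) :
    (∑ i : Fin q, (Finset.Ioi i).card) * 2 = q * (q - 1) := by
  simp_rw [Fin.card_Ioi]
  rw [Fin.sum_univ_eq_sum_range (q - 1 - ·), Finset.sum_range_reflect (·),
    Finset.sum_range_id_mul_two]

/-- Dimension of the multihomogeneous component `ST(X)_{m_1,…,m_q}` of the free special
Tortkara algebra on `q` generators:
`dim ST(X)_{m_1,…,m_q} = Σ_{i<j} ((n−2)!/(m_1!⋯m_q!))·m_i·m_j` where `n = m_1+⋯+m_q ≥ 2`;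
in particular the multilinear part has dimension `q!/2`. -/
theorem dim_ST_multihomogeneous (K : Type) [Field K] [CharZero K] (q : ℕ) (m : Fin q → ℕ)
    (n : ℕ) (hn : n = ∑ i, m i) (h2 : 2 ≤ n) :
    ((Module.finrank K (Submodule.span K
        {f : Zin K (Fin q) | InST f ∧
          ∀ w ∈ f.support, ∀ i : Fin q, (w : Word (Fin q)).1.count i = m i}) : ℚ) =
      ∑ i : Fin q, ∑ j ∈ Finset.Ioi i,
        (((n - 2).factorial * m i * m j : ℕ) : ℚ) / ∏ k : Fin q, ((m k).factorial : ℚ)) ∧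
    ((∀ i, m i = 1) →
      Module.finrank K (Submodule.span K
        {f : Zin K (Fin q) | InST f ∧
          ∀ w ∈ f.support, ∀ i : Fin q, (w : Word (Fin q)).1.count i = m i}) * 2
        = q.factorial) := by
  subst hn
  have hrank := Zin.finrank_span_inST_mul_prod_factorial (K := K) m h2
  refine ⟨?_, fun hm => ?_⟩
  · have hprod : ∏ k, ((m k).factorial : ℚ) ≠ 0 :=
      Finset.prod_ne_zero_iff.mpr fun k _ => Nat.cast_ne_zero.mpr (m k).factorial_ne_zero
    simp only [← Finset.sum_div]
    rw [eq_div_iff hprod]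
    exact_mod_cast hrank
  · obtain ⟨r, rfl⟩ : ∃ r, q = r + 2 := Nat.exists_eq_add_of_le' (by simpa [hm] using h2)
    have hpairs := sum_card_Ioi_mul_two (r + 2)
    simp only [hm, Finset.sum_const, Finset.prod_const_one, Nat.factorial_one, mul_one,
      smul_eq_mul, Finset.card_univ, Fintype.card_fin, ← Finset.sum_mul] at hrank ⊢
    rw [hrank, mul_right_comm, hpairs, Nat.factorial_succ, Nat.factorial_succ]
    simp only [Nat.add_sub_cancel, mul_assoc]
    rfl
end

section
/- Let a ∈ Zin(X) and let b, c ∈ ST(X) be Lie elements. Then (a∘b)∘c − (a∘c)∘b ∈ ST(X) and b∘c − c∘b ∈ ST(X). -/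
/-!
Let `S` be a subspace of a Zinbiel algebra closed under commutators, `G` the set of all `a` with
`(ab)c - (ac)b ∈ S` for `b, c ∈ S`, and `a ⧢ b = ab + ba`, a commutative and associative product.
The Zinbiel identity gives `2a ∈ G` for `a ∈ S`, and `ad + a ⧢ d ∈ G` for `a ∈ G`, `d ∈ S`. In terms
of the operator `B : ax ↦ a ⧢ x`, `x ↦ x` (where `x ∈ S`) this says that `1 + B` maps left-normed
products of `n` elements of `S` into `G`, once the products of fewer elements are known to be in
`G`. Now `B` is a derivation of `⧢`, so for `y₁, …, yₖ ∈ S`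

  `(1 + B) (ax ⧢ y₁ ⧢ ⋯ ⧢ yₖ) = (k + 1) (ax ⧢ y₁ ⧢ ⋯ ⧢ yₖ) + a ⧢ x ⧢ y₁ ⧢ ⋯ ⧢ yₖ`.

The last term has a shorter first factor, hence lies in `G` by induction on the length of that
factor, and in characteristic zero so does `ax ⧢ y₁ ⧢ ⋯ ⧢ yₖ`. For `k = 0` this is the induction
step on `n`, so `G` contains everything generated by `S`. The free Zinbiel algebra is generated by
its Lie elements, since they include the letters.
-/

/-- The symmetrized product `a ⧢ b = ab + ba`, which is the shuffle product in the free Zinbiel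
algebra. -/
def symMul (K : Type*) {A : Type*} [CommRing K] [NonUnitalNonAssocRing A] [Module K A]
    [IsScalarTower K A A] [SMulCommClass K A A] : A →ₗ[K] A →ₗ[K] A :=
  LinearMap.mul K A + (LinearMap.mul K A).flip

local notation:70 a:71 "⧢[" K "]" b:70 => symMul K a b

section NonAssoc

variable {K A : Type*} [CommRing K] [NonUnitalNonAssocRing A] [Module K A] [IsScalarTower K A A]

/-- The elements of `A` on which right multiplications by elements of `S` commute modulo `S`. -/
def rightCommutant (S : Submodule K A) : Submodule K A where
  carrier := {a | ∀ b ∈ S, ∀ c ∈ S, a * b * c - a * c * b ∈ S}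
  zero_mem' b _ c _ := by simp
  add_mem' {p q} hp hq b hb c hc := by
    simpa only [add_mul, add_sub_add_comm] using S.add_mem (hp b hb c hc) (hq b hb c hc)
  smul_mem' r p hp b hb c hc := by
    simpa only [smul_mul_assoc, smul_sub] using S.smul_mem r (hp b hb c hc)

variable [SMulCommClass K A A]

theorem symMul_apply (a b : A) : a ⧢[K] b = a * b + b * a := rfl

theorem symMul_comm (a b : A) : a ⧢[K] b = b ⧢[K] a := add_comm _ _

/-- The span `(⋯(S S)⋯)S` of the left-normed products of `n + 1` elements of `S`. -/
def leftNormed (S : Submodule K A) : ℕ → Submodule K A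
  | 0 => S
  | n + 1 => Submodule.map₂ (LinearMap.mul K A) (leftNormed S n) S

/-- The graph, on left-normed products of `n + 1` elements of `S`, of the operator `a x ↦ a ⧢ x`,
`x ↦ x`, where `x ∈ S`. It is named after its form `∑ x ⧢ ∂ₓ` on the free Zinbiel algebra, where
`∂ₓ` deletes a last letter `x`. In general the operator is multivalued, hence the encoding as a
submodule of pairs. -/
def eulerGraph (S : Submodule K A) : ℕ → Submodule K (A × A)
  | 0 => Submodule.span K {p | ∃ x ∈ S, p = (x, x)}
  | n + 1 => Submodule.span K {p | ∃ a ∈ leftNormed S n, ∃ x ∈ S, p = (a * x, a ⧢[K] x)}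

theorem mul_mem_leftNormed_succ {S : Submodule K A} {n : ℕ} {a x : A}
    (ha : a ∈ leftNormed S n) (hx : x ∈ S) : a * x ∈ leftNormed S (n + 1) :=
  Submodule.apply_mem_map₂ (LinearMap.mul K A) ha hx

end NonAssoc

/-- Rings, without unit or associativity, satisfying the Zinbiel identity. A Zinbiel algebra over
`K` is encoded as a Zinbiel ring with a compatible `K`-module structure. -/
class ZinbielRing (A : Type*) extends NonUnitalNonAssocRing A where
  mul_mul_eq (a b c : A) : a * (b * c) = a * b * c + b * a * c

section Zinbiel

variable {K A : Type*} [CommRing K] [ZinbielRing A] [Module K A] [IsScalarTower K A A]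
  {S : Submodule K A}

theorem add_self_mem_rightCommutant (hS : ∀ a ∈ S, ∀ b ∈ S, a * b - b * a ∈ S) {a : A}
    (ha : a ∈ S) : a + a ∈ rightCommutant S := by
  intro b hb c hc
  have h : (a + a) * b * c - (a + a) * c * b =
      ((c * a - a * c) * b - b * (c * a - a * c))
        + ((a * b - b * a) * c - c * (a * b - b * a)) := by
    simp only [add_mul, sub_mul, mul_sub, ZinbielRing.mul_mul_eq]
    abel
  exact h ▸ add_mem (hS _ (hS c hc a ha) b hb) (hS _ (hS a ha b hb) c hc)

variable [SMulCommClass K A A]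

variable (K) in
theorem mul_mul_eq_symMul_mul (a b c : A) : a * (b * c) = (a ⧢[K] b) * c := by
  rw [ZinbielRing.mul_mul_eq, symMul_apply, add_mul]

theorem symMul_mul (a b c : A) : a ⧢[K] (b * c) = (a ⧢[K] b) * c + b * c * a := by
  rw [symMul_apply, mul_mul_eq_symMul_mul K]

theorem symMul_left_comm (a b c : A) : a ⧢[K] b ⧢[K] c = b ⧢[K] a ⧢[K] c := by
  simp only [symMul_apply, mul_add, add_mul, ZinbielRing.mul_mul_eq]
  abel

theorem mul_mem_leftNormed {m n : ℕ} {a b : A} (ha : a ∈ leftNormed S m)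
    (hb : b ∈ leftNormed S n) : a * b ∈ leftNormed S (m + n + 1) := by
  induction hN : m + n generalizing m n a b with
  | zero =>
    obtain ⟨rfl, rfl⟩ := Nat.add_eq_zero_iff.1 hN
    exact mul_mem_leftNormed_succ ha hb
  | succ N ih =>
    cases n with
    | zero =>
      obtain rfl : m = N + 1 := hN
      exact mul_mem_leftNormed_succ ha hb
    | succ n =>
      suffices leftNormed S (n + 1) ≤ (leftNormed S (N + 1 + 1)).comap (LinearMap.mulLeft K a) from
        this hb
      refine Submodule.map₂_le.2 fun b hb x hx => ?_
      simp only [Submodule.mem_comap, LinearMap.mulLeft_apply, LinearMap.mul_apply',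
        mul_mul_eq_symMul_mul K]
      exact mul_mem_leftNormed_succ
        (add_mem (ih ha hb (by omega)) (ih hb ha (by omega))) hx

theorem mem_iSup_leftNormed_of_mem_adjoin {a : A}
    (ha : a ∈ NonUnitalAlgebra.adjoin K (S : Set A)) : a ∈ ⨆ n, leftNormed S n := by
  induction ha using NonUnitalAlgebra.adjoin_induction with
  | mem x hx => exact Submodule.mem_iSup_of_mem 0 hx
  | add x y _ _ hx hy => exact add_mem hx hy
  | zero => exact zero_mem _
  | smul r x _ hx => exact Submodule.smul_mem _ r hx
  | mul x y _ _ hx hy =>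
    suffices Submodule.map₂ (LinearMap.mul K A) (⨆ m, leftNormed S m) (⨆ n, leftNormed S n) ≤
        ⨆ n, leftNormed S n from this (Submodule.apply_mem_map₂ _ hx hy)
    simp only [Submodule.map₂_iSup_left, Submodule.map₂_iSup_right]
    exact iSup₂_le fun m n => Submodule.map₂_le.2 fun a ha b hb =>
      Submodule.mem_iSup_of_mem _ (mul_mem_leftNormed ha hb)

theorem symMul_mem_eulerGraph {n : ℕ} {p q y : A} (hy : y ∈ S) (h : (p, q) ∈ eulerGraph S n) :
    (y ⧢[K] p, y ⧢[K] p + y ⧢[K] q) ∈ eulerGraph S (n + 1) := by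
  obtain ⟨E, hE⟩ : ∃ E : A × A →ₗ[K] A × A, ∀ p q, E (p, q) = (y ⧢[K] p, y ⧢[K] p + y ⧢[K] q) :=
    ⟨(symMul K y ∘ₗ .fst K A A).prod (symMul K y ∘ₗ .fst K A A + symMul K y ∘ₗ .snd K A A),
      fun _ _ => rfl⟩
  suffices eulerGraph S n ≤ (eulerGraph S (n + 1)).comap E from hE p q ▸ this h
  have mem {m : ℕ} {a x : A} (ha : a ∈ leftNormed S m) (hx : x ∈ S) :
      (a * x, a ⧢[K] x) ∈ eulerGraph S (m + 1) := Submodule.subset_span ⟨a, ha, x, hx, rfl⟩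
  cases n with
  | zero =>
    rw [eulerGraph, Submodule.span_le]
    rintro _ ⟨x, hx, rfl⟩
    have split : E (x, x) = (y * x, y ⧢[K] x) + (x * y, x ⧢[K] y) := by
      rw [hE, symMul_comm x y]
      rfl
    rw [SetLike.mem_coe, Submodule.mem_comap, split]
    exact add_mem (mem hy hx) (mem hx hy)
  | succ n =>
    rw [eulerGraph, Submodule.span_le]
    rintro _ ⟨a, ha, x, hx, rfl⟩
    have hya : y ⧢[K] a ∈ leftNormed S (n + 1) := by
      rw [symMul_apply]
      refine add_mem ?_ (mul_mem_leftNormed_succ ha hy)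
      simpa only [Nat.zero_add] using mul_mem_leftNormed (m := 0) hy ha
    have split : E (a * x, a ⧢[K] x) =
        ((y ⧢[K] a) * x, (y ⧢[K] a) ⧢[K] x) + (a * x * y, (a * x) ⧢[K] y) := by
      rw [hE, Prod.mk_add_mk, ← symMul_mul, symMul_comm a x, symMul_left_comm, symMul_comm x,
        symMul_comm (a * x), add_comm (_ ⧢[K] x)]
    rw [SetLike.mem_coe, Submodule.mem_comap, split]
    exact add_mem (mem hya hx) (mem (mul_mem_leftNormed_succ ha hx) hy)

theorem pow_symMul_mem_eulerGraph {k n : ℕ} {T : Module.End K A}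
    (hT : T ∈ S.map (symMul K) ^ k) {p q : A} (h : (p, q) ∈ eulerGraph S n) :
    (T p, k • T p + T q) ∈ eulerGraph S (n + k) := by
  induction hT using Submodule.pow_induction_on_left' with
  | algebraMap r => simpa using Submodule.smul_mem _ r h
  | add T U k _ _ hT hU =>
    convert add_mem hT hU using 1
    simp only [LinearMap.add_apply, Prod.mk_add_mk, smul_add, add_add_add_comm]
  | mem_mul Y hY k T _ hT =>
    obtain ⟨y, hy, rfl⟩ := hY
    convert symMul_mem_eulerGraph hy hT using 1
    · rfl
    rw [Module.End.mul_apply, Module.End.mul_apply, map_add, map_nsmul, succ_nsmul', add_assoc]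

theorem mul_add_symMul_mem_rightCommutant (hS : ∀ a ∈ S, ∀ b ∈ S, a * b - b * a ∈ S) {a d : A}
    (ha : a ∈ rightCommutant S) (hd : d ∈ S) : a * d + a ⧢[K] d ∈ rightCommutant S := by
  intro b hb c hc
  have h : (a * d + a ⧢[K] d) * b * c - (a * d + a ⧢[K] d) * c * b =
      (a * (c * b - b * c) * d - a * d * (c * b - b * c))
        + ((a * b * c - a * c * b) * d - d * (a * b * c - a * c * b))
        - (a * (d * c - c * d) * b - a * b * (d * c - c * d))
        - (a * (b * d - d * b) * c - a * c * (b * d - d * b)) := by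
    simp only [symMul_apply, add_mul, sub_mul, mul_sub, ZinbielRing.mul_mul_eq]
    abel
  rw [h]
  exact sub_mem (sub_mem (add_mem (ha _ (hS c hc b hb) d hd) (hS _ (ha b hb c hc) d hd))
    (ha _ (hS d hd c hc) b hb)) (ha _ (hS b hb d hd) c hc)

theorem add_mem_rightCommutant_of_mem_eulerGraph (hS : ∀ a ∈ S, ∀ b ∈ S, a * b - b * a ∈ S)
    {n : ℕ} (hn : ∀ m < n, leftNormed S m ≤ rightCommutant S) {p q : A}
    (h : (p, q) ∈ eulerGraph S n) : p + q ∈ rightCommutant S := by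
  suffices eulerGraph S n ≤ (rightCommutant S).comap (.fst K A A + .snd K A A) from this h
  cases n with
  | zero =>
    rw [eulerGraph, Submodule.span_le]
    rintro _ ⟨x, hx, rfl⟩
    exact add_self_mem_rightCommutant hS hx
  | succ n =>
    rw [eulerGraph, Submodule.span_le]
    rintro _ ⟨a, ha, x, hx, rfl⟩
    exact mul_add_symMul_mem_rightCommutant hS (hn n n.lt_succ_self ha) hx

end Zinbiel

section Field

variable {K A : Type*} [Field K] [CharZero K] [ZinbielRing A] [Module K A] [IsScalarTower K A A]
  [SMulCommClass K A A] {S : Submodule K A}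

theorem pow_symMul_mem_rightCommutant (hS : ∀ a ∈ S, ∀ b ∈ S, a * b - b * a ∈ S) {m k : ℕ}
    (hlt : ∀ j < m + k, leftNormed S j ≤ rightCommutant S) {T : Module.End K A}
    (hT : T ∈ S.map (symMul K) ^ k) {a : A} (ha : a ∈ leftNormed S m) :
    T a ∈ rightCommutant S := by
  have of_nsmul {j : ℕ} {b : A} (h : (j + 1) • b ∈ rightCommutant S) : b ∈ rightCommutant S := by
    rw [← Nat.cast_smul_eq_nsmul K] at h
    exact ((rightCommutant S).smul_mem_iff (Nat.cast_ne_zero.2 j.succ_ne_zero)).1 h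
  induction m generalizing k T a with
  | zero =>
    have h := pow_symMul_mem_eulerGraph (n := 0) hT (Submodule.subset_span ⟨a, ha, rfl⟩)
    have hsum := add_mem_rightCommutant_of_mem_eulerGraph hS hlt h
    refine of_nsmul (j := k + 1) ?_
    rwa [succ_nsmul, succ_nsmul, add_comm]
  | succ m ih =>
    suffices leftNormed S (m + 1) ≤ (rightCommutant S).comap T from this ha
    refine Submodule.map₂_le.2 fun a ha x hx => of_nsmul (j := k) ?_
    have h := pow_symMul_mem_eulerGraph (n := m + 1) hT
      (Submodule.subset_span ⟨a, ha, x, hx, rfl⟩)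
    have hsum := add_mem_rightCommutant_of_mem_eulerGraph hS hlt h
    have hTx : T * symMul K x ∈ S.map (symMul K) ^ (k + 1) :=
      Submodule.mul_mem_mul hT (Submodule.mem_map_of_mem hx)
    have hrest : T (a ⧢[K] x) ∈ rightCommutant S := by
      rw [symMul_comm]
      exact ih (fun j hj => hlt j (by omega)) hTx ha
    rw [← add_assoc, ← succ_nsmul'] at hsum
    exact ((rightCommutant S).add_mem_iff_left hrest).1 hsum

theorem leftNormed_le_rightCommutant (hS : ∀ a ∈ S, ∀ b ∈ S, a * b - b * a ∈ S) (n : ℕ) :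
    leftNormed S n ≤ rightCommutant S := by
  induction n using Nat.strong_induction_on with
  | h n ih =>
    intro a ha
    have one_mem : (1 : Module.End K A) ∈ S.map (symMul K) ^ 0 :=
      Submodule.one_le.1 (pow_zero _).ge
    exact pow_symMul_mem_rightCommutant hS ih one_mem ha

theorem abc_sub_acb_is_lie_general (hS : ∀ a ∈ S, ∀ b ∈ S, a * b - b * a ∈ S) {a b c : A}
    (ha : a ∈ NonUnitalAlgebra.adjoin K (S : Set A)) (hb : b ∈ S) (hc : c ∈ S) :
    a * b * c - a * c * b ∈ S :=
  iSup_le (leftNormed_le_rightCommutant hS) (mem_iSup_leftNormed_of_mem_adjoin ha) b hb c hc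

end Field

section Shuffle

variable {X : Type}

/-- The shuffles of two words, as a multiset: unlike for the list `shuffles u v`, commutativity and
associativity hold as equalities. -/
def shuffle (u v : List X) : Multiset (List X) := shuffles u v

theorem shuffle_nil_left (v : List X) : shuffle [] v = {v} := by
  rw [shuffle, shuffles, Multiset.coe_singleton]

theorem shuffle_nil_right (u : List X) : shuffle u [] = {u} := by
  cases u <;> rw [shuffle, shuffles, Multiset.coe_singleton]

theorem shuffle_cons_cons (a b : X) (u v : List X) :
    shuffle (a :: u) (b :: v) =
      (shuffle u (b :: v)).map (a :: ·) + (shuffle (a :: u) v).map (b :: ·) := by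
  rw [shuffle, shuffles]
  rfl

theorem shuffle_comm : ∀ u v : List X, shuffle u v = shuffle v u
  | [], v => by rw [shuffle_nil_left, shuffle_nil_right]
  | u, [] => by rw [shuffle_nil_left, shuffle_nil_right]
  | a :: u, b :: v => by
    rw [shuffle_cons_cons, shuffle_cons_cons, shuffle_comm u, shuffle_comm _ v, add_comm]
  termination_by u v => u.length + v.length

theorem shuffle_assoc : ∀ u v w : List X,
    (shuffle u v).bind (shuffle · w) = (shuffle v w).bind (shuffle u ·)
  | [], v, w => by
    simpa [shuffle_nil_left] using (Multiset.bind_singleton (shuffle v w) id).symm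
  | u, [], w => by simp [shuffle_nil_left, shuffle_nil_right]
  | u, v, [] => by
    simpa [shuffle_nil_right] using Multiset.bind_singleton (shuffle u v) id
  | a :: u, b :: v, c :: w => by
    have ha := shuffle_assoc u (b :: v) (c :: w)
    have hb := shuffle_assoc (a :: u) v (c :: w)
    have hc := shuffle_assoc (a :: u) (b :: v) w
    simp only [shuffle_cons_cons, Multiset.add_bind, Multiset.bind_add, Multiset.bind_map,
      ← Multiset.map_bind] at ha hb hc ⊢
    rw [ha, hb, ← hc]
    simp only [Multiset.map_add]
    abel
  termination_by u v w => u.length + v.length + w.length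

theorem shuffle_append_singleton : ∀ (u v : List X) (x y : X),
    shuffle (u ++ [x]) (v ++ [y]) =
      (shuffle u (v ++ [y])).map (· ++ [x]) + (shuffle (u ++ [x]) v).map (· ++ [y])
  | [], [], x, y => by
    simp [shuffle_cons_cons, shuffle_nil_left, shuffle_nil_right, add_comm]
  | [], b :: v, x, y => by
    have h := shuffle_append_singleton [] v x y
    simp only [List.nil_append, List.cons_append, shuffle_cons_cons, shuffle_nil_left] at h ⊢
    simpa [h] using Multiset.cons_swap _ _ _
  | a :: u, [], x, y => by
    have h := shuffle_append_singleton u [] x y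
    simp only [List.nil_append, List.cons_append, shuffle_cons_cons, shuffle_nil_right] at h ⊢
    simpa [h, add_comm] using Multiset.cons_swap _ _ _
  | a :: u, b :: v, x, y => by
    have ha := shuffle_append_singleton u (b :: v) x y
    have hb := shuffle_append_singleton (a :: u) v x y
    simp only [List.cons_append] at ha hb ⊢
    simp only [shuffle_cons_cons, ha, hb, Multiset.map_add, Multiset.map_map, Function.comp_def,
      List.cons_append]
    abel
  termination_by u v => u.length + v.length

end Shuffle

/-- The product `zmul` as a bilinear map. -/
noncomputable def zmulBilin (K X : Type) [Field K] : Zin K X →ₗ[K] Zin K X →ₗ[K] Zin K X :=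
  Finsupp.linearCombination K fun u => Finsupp.linearCombination K fun w =>
    ofLists ((shuffles u.1 w.1.dropLast).map fun s => s ++ [w.1.getLast w.2])

theorem zmulBilin_apply {K X : Type} [Field K] (f g : Zin K X) :
    zmulBilin K X f g = zmul f g := by
  simp only [zmulBilin, zmul, Finsupp.linearCombination_apply, Finsupp.sum, LinearMap.sum_apply,
    LinearMap.smul_apply, Finset.smul_sum, smul_smul]

theorem zmul_single_single {K X : Type} [Field K] (u w : Word X) :
    (zmul (Finsupp.single u 1) (Finsupp.single w 1) : Zin K X) =
      ofLists ((shuffles u.1 w.1.dropLast).map fun s => s ++ [w.1.getLast w.2]) := by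
  simp only [← zmulBilin_apply, zmulBilin, Finsupp.linearCombination_single, one_smul]

/-- The free Zinbiel algebra on `X`. It is a type synonym of `Zin K X`, on which multiplication
already means the pointwise product of finitely supported functions. -/
def FreeZinbielAlgebra (K X : Type) [Field K] : Type := Zin K X

namespace FreeZinbielAlgebra

variable {K X : Type} [Field K]

noncomputable instance : AddCommGroup (FreeZinbielAlgebra K X) :=
  inferInstanceAs (AddCommGroup (Zin K X))

noncomputable instance : Module K (FreeZinbielAlgebra K X) :=
  inferInstanceAs (Module K (Zin K X))

noncomputable instance : Mul (FreeZinbielAlgebra K X) := ⟨zmul⟩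

noncomputable instance : NonUnitalNonAssocRing (FreeZinbielAlgebra K X) where
  left_distrib := fun (f g h : Zin K X) =>
    show zmul f (g + h) = zmul f g + zmul f h by simp only [← zmulBilin_apply, map_add]
  right_distrib := fun (f g h : Zin K X) =>
    show zmul (f + g) h = zmul f h + zmul g h by
      simp only [← zmulBilin_apply, map_add, LinearMap.add_apply]
  zero_mul := fun (f : Zin K X) =>
    show zmul 0 f = 0 by simp only [← zmulBilin_apply, map_zero, LinearMap.zero_apply]
  mul_zero := fun (f : Zin K X) =>
    show zmul f 0 = 0 by simp only [← zmulBilin_apply, map_zero]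

instance : IsScalarTower K (FreeZinbielAlgebra K X) (FreeZinbielAlgebra K X) where
  smul_assoc := fun r (f g : Zin K X) =>
    show zmul (r • f) g = r • zmul f g by
      simp only [← zmulBilin_apply, map_smul, LinearMap.smul_apply]

instance : SMulCommClass K (FreeZinbielAlgebra K X) (FreeZinbielAlgebra K X) where
  smul_comm := fun r (f g : Zin K X) =>
    show r • zmul f g = zmul f (r • g) by simp only [← zmulBilin_apply, map_smul]

/-- The basis vector of a word, `0` for the empty word. -/
noncomputable def ofWord (l : List X) : FreeZinbielAlgebra K X := ofList l

/-- The sum of the basis vectors of a multiset of words. -/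
noncomputable def sumWords (s : Multiset (List X)) : FreeZinbielAlgebra K X := (s.map ofWord).sum

theorem sumWords_coe (ls : List (List X)) :
    sumWords (ls : Multiset (List X)) = (ofLists ls : Zin K X) := by
  rw [sumWords, Multiset.map_coe, Multiset.sum_coe]
  rfl

theorem sumWords_add (s t : Multiset (List X)) :
    (sumWords (s + t) : FreeZinbielAlgebra K X) = sumWords s + sumWords t := by
  rw [sumWords, Multiset.map_add, Multiset.sum_add, ← sumWords, ← sumWords]

theorem ofWord_append_singleton (l : List X) (x : X) :
    (ofWord (l ++ [x]) : FreeZinbielAlgebra K X) = Finsupp.single ⟨l ++ [x], by simp⟩ 1 := by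
  cases l <;> rfl

@[elab_as_elim]
theorem induction_on {p : FreeZinbielAlgebra K X → Prop} (f : FreeZinbielAlgebra K X)
    (zero : p 0) (add : ∀ f g, p f → p g → p (f + g)) (smul : ∀ (r : K) (f), p f → p (r • f))
    (ofWord : ∀ l x, p (ofWord (l ++ [x]))) : p f := by
  induction f using Finsupp.induction_linear with
  | zero => exact zero
  | add f g hf hg => exact add f g hf hg
  | single w r =>
    obtain ⟨w, hw⟩ := w
    obtain rfl | ⟨l, x, rfl⟩ := w.eq_nil_or_concat'
    · exact absurd rfl hw
    · have h := smul r _ (ofWord l x)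
      rw [ofWord_append_singleton] at h
      exact (Finsupp.smul_single_one _ r) ▸ h

theorem ofWord_mul_ofWord (u v : List X) (x y : X) :
    (ofWord (u ++ [x]) * ofWord (v ++ [y]) : FreeZinbielAlgebra K X) =
      sumWords ((shuffle (u ++ [x]) v).map (· ++ [y])) := by
  rw [ofWord_append_singleton, ofWord_append_singleton, shuffle, Multiset.map_coe, sumWords_coe]
  refine (zmul_single_single _ _).trans ?_
  simp only [List.dropLast_concat, List.getLast_concat]

theorem ofWord_mul_sumWords (u : List X) (s : Multiset (List X)) (x y : X) :
    (ofWord (u ++ [x]) * sumWords (s.map (· ++ [y])) : FreeZinbielAlgebra K X) =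
      sumWords ((s.bind (shuffle (u ++ [x]))).map (· ++ [y])) := by
  simp only [sumWords, Multiset.map_map, Function.comp_def, ← Multiset.sum_map_mul_left,
    ofWord_mul_ofWord, Multiset.map_bind, Multiset.sum_bind]

theorem sumWords_mul_ofWord (s : Multiset (List X)) (v : List X) (x y : X) :
    (sumWords (s.map (· ++ [x])) * ofWord (v ++ [y]) : FreeZinbielAlgebra K X) =
      sumWords (((s.map (· ++ [x])).bind (shuffle · v)).map (· ++ [y])) := by
  simp only [sumWords, Multiset.map_map, Function.comp_def, ← Multiset.sum_map_mul_right,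
    ofWord_mul_ofWord, Multiset.map_bind, Multiset.sum_bind, Multiset.bind_map]

theorem ofWord_mul_mul_eq (u v w : List X) (x y z : X) :
    (ofWord (u ++ [x]) * (ofWord (v ++ [y]) * ofWord (w ++ [z])) : FreeZinbielAlgebra K X) =
      ofWord (u ++ [x]) * ofWord (v ++ [y]) * ofWord (w ++ [z]) +
        ofWord (v ++ [y]) * ofWord (u ++ [x]) * ofWord (w ++ [z]) := by
  have shuffle_eq : (shuffle (v ++ [y]) w).bind (shuffle (u ++ [x])) =
      ((shuffle (u ++ [x]) v).map (· ++ [y])).bind (shuffle · w) +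
        ((shuffle (v ++ [y]) u).map (· ++ [x])).bind (shuffle · w) := by
    rw [← shuffle_assoc, shuffle_append_singleton, shuffle_comm u, add_comm, Multiset.add_bind]
  simp only [ofWord_mul_ofWord, ofWord_mul_sumWords, sumWords_mul_ofWord, shuffle_eq,
    Multiset.map_add, sumWords_add]

noncomputable instance : ZinbielRing (FreeZinbielAlgebra K X) where
  mul_mul_eq f g h := by
    induction f using induction_on with
    | zero => simp only [zero_mul, mul_zero, add_zero]
    | add f₁ f₂ h₁ h₂ => simp only [add_mul, mul_add, h₁, h₂, add_add_add_comm]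
    | smul r f hf => simp only [smul_mul_assoc, mul_smul_comm, hf, smul_add]
    | ofWord u x =>
    induction g using induction_on with
    | zero => simp only [zero_mul, mul_zero, add_zero]
    | add g₁ g₂ h₁ h₂ => simp only [add_mul, mul_add, h₁, h₂, add_add_add_comm]
    | smul r g hg => simp only [smul_mul_assoc, mul_smul_comm, hg, smul_add]
    | ofWord v y =>
    induction h using induction_on with
    | zero => simp only [mul_zero, add_zero]
    | add h₁ h₂ ih₁ ih₂ => simp only [mul_add, ih₁, ih₂, add_add_add_comm]
    | smul r h ih => simp only [mul_smul_comm, ih, smul_add]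
    | ofWord w z => exact ofWord_mul_mul_eq u v w x y z

variable (K X) in
/-- The subspace `ST(X)` of Lie elements. -/
def lieElements : Submodule K (FreeZinbielAlgebra K X) where
  carrier := {f | InST f}
  zero_mem' := InST.zero
  add_mem' := InST.add
  smul_mem' r _ := InST.smul r

theorem ofWord_mem_adjoin_lieElements (l : List X) :
    ofWord l ∈ NonUnitalAlgebra.adjoin K (lieElements K X : Set (FreeZinbielAlgebra K X)) := by
  have letter_mem (x : X) : ofWord [x] ∈
      NonUnitalAlgebra.adjoin K (lieElements K X : Set (FreeZinbielAlgebra K X)) :=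
    NonUnitalAlgebra.subset_adjoin K (InST.letter x)
  induction l using List.reverseRecOn with
  | nil => exact zero_mem _
  | append_singleton l x ih =>
    obtain rfl | ⟨l, y, rfl⟩ := l.eq_nil_or_concat'
    · exact letter_mem x
    · have h := mul_mem ih (letter_mem x)
      rwa [← List.nil_append [x], ofWord_mul_ofWord, shuffle_nil_right, sumWords,
        Multiset.map_singleton, Multiset.map_singleton, Multiset.sum_singleton] at h

theorem adjoin_lieElements :
    NonUnitalAlgebra.adjoin K (lieElements K X : Set (FreeZinbielAlgebra K X)) = ⊤ := by
  refine NonUnitalAlgebra.eq_top_iff.2 fun f => ?_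
  induction f using induction_on with
  | zero => exact zero_mem _
  | add f g hf hg => exact add_mem hf hg
  | smul r f hf => exact SMulMemClass.smul_mem r hf
  | ofWord l x => exact ofWord_mem_adjoin_lieElements _

end FreeZinbielAlgebra

/-- If `b` and `c` are Lie elements of `Zin(X)` and `a ∈ Zin(X)`, then
`(a∘b)∘c − (a∘c)∘b` and `b∘c − c∘b` are Lie elements. -/
theorem abc_sub_acb_is_lie (K X : Type) [Field K] [CharZero K] (a f g : Zin K X)
    (hf : InST f) (hg : InST g) :
    InST (zmul (zmul a f) g - zmul (zmul a g) f) ∧ InST (zmul f g - zmul g f) :=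
  ⟨abc_sub_acb_is_lie_general (S := FreeZinbielAlgebra.lieElements K X)
    (fun _ hb _ hc => InST.bracket hb hc) (FreeZinbielAlgebra.adjoin_lieElements.ge trivial) hf hg,
    InST.bracket hf hg⟩
end
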